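/- arXiv:1712.04549 — 3 statements merged into one kernel-verified Lean document; each statement's English description precedes it below -/
import Mathlib

section
/- Let H be a graph that has no minor isomorphic to K_4, K_{2,3}, C_{3,2}, or A. Then there exists a positive integer k such that H is isomorphic to a minor of 𝒫_k and H is isomorphic to a minor of 𝒬_k. -/
/-!
Common definitions: minors, widths, connectivity, the specific graphs
`K4`, `K23`, `C32`, `graphA`, the binary trees `CT_h`, the graphs `𝒫_k`, `𝒬_k`,
the trees `T_h`, homeomorphic embeddings, cascades, and related notions,
following Dang--Thomas, "Minors of two-connected graphs of large path-width".
-/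

open SimpleGraph

/-- A minor model of `H` in `G`: branch sets `f w` are nonempty, connected,
pairwise disjoint, and edges of `H` are realized by edges of `G` between branch sets. -/
def IsMinorModel {W V : Type*} (H : SimpleGraph W) (G : SimpleGraph V) (f : W → Set V) : Prop :=
  (∀ w, (f w).Nonempty) ∧
  (∀ w, (G.induce (f w)).Connected) ∧
  (∀ w₁ w₂ : W, w₁ ≠ w₂ → Disjoint (f w₁) (f w₂)) ∧
  (∀ w₁ w₂ : W, H.Adj w₁ w₂ → ∃ v₁ ∈ f w₁, ∃ v₂ ∈ f w₂, G.Adj v₁ v₂)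

/-- `H` is (isomorphic to) a minor of `G`. -/
def IsMinor {W V : Type*} (H : SimpleGraph W) (G : SimpleGraph V) : Prop :=
  ∃ f : W → Set V, IsMinorModel H G f

/-- The complete graph on four vertices. -/
def K4 : SimpleGraph (Fin 4) := ⊤

/-- The complete bipartite graph `K_{2,3}`. -/
def K23 : SimpleGraph (Fin 2 ⊕ Fin 3) := completeBipartiteGraph (Fin 2) (Fin 3)

/-- The graph `A`: a cycle `a₁a₂a₃a₄a₅a₆a₁` plus the edges `a₁a₃`, `a₃a₅`, `a₅a₁`. -/
def graphA : SimpleGraph (Fin 6) :=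
  SimpleGraph.fromEdgeSet
    {s(0, 1), s(1, 2), s(2, 3), s(3, 4), s(4, 5), s(5, 0), s(0, 2), s(2, 4), s(4, 0)}

/-- The graph `C_{3,2}`: two disjoint triangles. -/
def C32 : SimpleGraph (Fin 2 × Fin 3) :=
  SimpleGraph.fromRel (fun u v => u.1 = v.1)

/-- A graph is outerplanar iff it has no `K₄` minor and no `K_{2,3}` minor
(the classical characterization of outerplanarity). -/
def Outerplanar {V : Type*} (G : SimpleGraph V) : Prop :=
  ¬ IsMinor K4 G ∧ ¬ IsMinor K23 G

/-- `G` is `k`-connected: it has more than `k` vertices and deleting fewer than `k`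
vertices leaves a connected graph. -/
def IsKConnected {V : Type*} [Fintype V] (k : ℕ) (G : SimpleGraph V) : Prop :=
  k + 1 ≤ Fintype.card V ∧
  ∀ S : Finset V, S.card < k → (G.induce ((↑S : Set V)ᶜ)).Connected

/-- `(Tr, X)` is a tree-decomposition of `G`: `Tr` is a tree, the bags `X t` cover all
vertices and edges (W1), and whenever `t₂` lies on the path of `Tr` between `t₁` and `t₃`
we have `X t₁ ∩ X t₃ ⊆ X t₂` (W2). -/
def IsTreeDecomp {V T : Type*} (G : SimpleGraph V) (Tr : SimpleGraph T) (X : T → Finset V) :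
    Prop :=
  Tr.IsTree ∧
  (∀ v : V, ∃ t, v ∈ X t) ∧
  (∀ u v : V, G.Adj u v → ∃ t, u ∈ X t ∧ v ∈ X t) ∧
  (∀ (t₁ t₂ t₃ : T) (p : Tr.Walk t₁ t₃), p.IsPath → t₂ ∈ p.support →
    ∀ v : V, v ∈ X t₁ → v ∈ X t₃ → v ∈ X t₂)

/-- A path-decomposition of `G`, with bags indexed by `Fin n`. -/
def IsPathDecomp {V : Type*} (G : SimpleGraph V) {n : ℕ} (X : Fin n → Finset V) : Prop :=
  (∀ v : V, ∃ i, v ∈ X i) ∧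
  (∀ u v : V, G.Adj u v → ∃ i, u ∈ X i ∧ v ∈ X i) ∧
  (∀ i j k : Fin n, i ≤ j → j ≤ k → ∀ v : V, v ∈ X i → v ∈ X k → v ∈ X j)

/-- The path-width of a finite graph: the least `w` such that `G` has a
path-decomposition all of whose bags have at most `w + 1` vertices. -/
noncomputable def pathwidth {V : Type*} [Fintype V] (G : SimpleGraph V) : ℕ :=
  sInf {w | ∃ (n : ℕ) (X : Fin n → Finset V), IsPathDecomp G X ∧ ∀ i, (X i).card ≤ w + 1}

/-- The tree-width of a finite graph: the least `w` such that `G` has a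
tree-decomposition all of whose bags have at most `w + 1` vertices. -/
noncomputable def treewidth {V : Type*} [Fintype V] (G : SimpleGraph V) : ℕ :=
  sInf {w | ∃ (T : Type) (_ : Fintype T) (Tr : SimpleGraph T) (X : T → Finset V),
    IsTreeDecomp G Tr X ∧ ∀ t, (X t).card ≤ w + 1}

/-- Vertices of the binary tree `CT_h`: paths from the root, recorded as reversed
lists of left/right moves, of length at most `h`. -/
abbrev CTVert (h : ℕ) := {l : List Bool // l.length ≤ h}

/-- The binary tree `CT_h` of height `h`. -/
def CTgraph (h : ℕ) : SimpleGraph (CTVert h) :=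
  SimpleGraph.fromEdgeSet
    {e | ∃ (b : Bool) (σ : List Bool) (hσ : σ.length < h),
      e = s((⟨σ, le_of_lt hσ⟩ : CTVert h), (⟨b :: σ, by simpa using hσ⟩ : CTVert h))}

/-- The graph `𝒫_k`: the binary tree `CT_k` together with one extra vertex (`none`)
adjacent to every leaf of `CT_k`. -/
def Pgraph (k : ℕ) : SimpleGraph (Option (CTVert k)) :=
  SimpleGraph.fromEdgeSet
    ({e | ∃ (b : Bool) (σ : List Bool) (hσ : σ.length < k),
        e = s(some (⟨σ, le_of_lt hσ⟩ : CTVert k), some (⟨b :: σ, by simpa using hσ⟩ : CTVert k))} ∪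
     {e | ∃ l : CTVert k, l.1.length = k ∧ e = s(none, some l)})

/-- Vertices of `𝒬_k`: the two base vertices of the root triangle (`Sum.inl false` and
`Sum.inl true`), together with one apex vertex for each node of the complete binary tree
of depth `< k` (recorded as a reversed list of moves). -/
abbrev QVert (k : ℕ) := Bool ⊕ {l : List Bool // l.length < k}

/-- The two ends of the base edge of the copy of the triangle at node `σ` of `𝒬_k`. -/
def qbase (k : ℕ) : List Bool → QVert k × QVert k
  | [] => (Sum.inl false, Sum.inl true)
  | b :: σ =>
      ((if b then (qbase k σ).2 else (qbase k σ).1),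
        if h : σ.length < k then Sum.inr ⟨σ, h⟩ else Sum.inl false)

/-- The graph `𝒬_k`, built from triangles as in the recursive definition: the triangle at
node `σ` consists of the base edge `qbase k σ` together with the apex vertex `Sum.inr σ`;
the base edge of `𝒬_k` is `s(Sum.inl false, Sum.inl true)`. -/
def Qgraph (k : ℕ) : SimpleGraph (QVert k) :=
  SimpleGraph.fromEdgeSet
    ({s(Sum.inl false, Sum.inl true)} ∪
     {e | ∃ (σ : List Bool) (h : σ.length < k),
        e = s(Sum.inr ⟨σ, h⟩, (qbase k σ).1) ∨ e = s(Sum.inr ⟨σ, h⟩, (qbase k σ).2)})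

/-- The minor vertices of the tree `T_h` (one for each string of length `≤ h`). -/
abbrev MVert (h : ℕ) := {l : List Bool // l.length ≤ h}

/-- The major vertices of the tree `T_h` (one for each string of length `≤ h - 1`). -/
abbrev JVert (h : ℕ) := {l : List Bool // l.length + 1 ≤ h}

/-- Vertices of the tree `T_h` (obtained from `CT_h` by subdividing every edge not incident
with a degree-one vertex and adding the minor root). -/
abbrev TVert (h : ℕ) := MVert h ⊕ JVert h

/-- The tree `T_h`: each major vertex `σ` is adjacent to the minor vertices `σ` (its parent),
`false :: σ` (its left neighbor) and `true :: σ` (its right neighbor). -/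
def Tgraph (h : ℕ) : SimpleGraph (TVert h) :=
  SimpleGraph.fromEdgeSet
    {e | ∃ (σ : List Bool) (hσ : σ.length + 1 ≤ h),
      e = s(Sum.inr ⟨σ, hσ⟩, Sum.inl ⟨σ, Nat.le_of_succ_le hσ⟩) ∨
      ∃ b : Bool, e = s(Sum.inr ⟨σ, hσ⟩, Sum.inl ⟨b :: σ, by simpa using hσ⟩)}

/-- A homeomorphic embedding of `TA` into `TB`: an injection such that for any two edges of
`TA` sharing an end `t`, the corresponding paths of `TB` are edge-disjoint. -/
def IsHomeoEmb {A B : Type*} (TA : SimpleGraph A) (TB : SimpleGraph B) (η : A → B) : Prop :=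
  Function.Injective η ∧
  ∀ ⦃t t₁ t₂ : A⦄, TA.Adj t t₁ → TA.Adj t t₂ → t₁ ≠ t₂ →
    ∀ (p₁ : TB.Walk (η t) (η t₁)) (p₂ : TB.Walk (η t) (η t₂)),
      p₁.IsPath → p₂.IsPath → ∀ e ∈ p₁.edges, e ∉ p₂.edges

/-- `v` lies in the span of `η`: it lies on a path of `TB` between two vertices in the
image of `η`. -/
def inSpan {A B : Type*} (TB : SimpleGraph B) (η : A → B) (v : B) : Prop :=
  ∃ (a₁ a₂ : A) (p : TB.Walk (η a₁) (η a₂)), p.IsPath ∧ v ∈ p.support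

/-- A cascade of height `h` and size `s` in the tree-decomposition `(Tr, X)`:
a homeomorphic embedding of `T_h` with `|X (η t)| = s` for every minor vertex `t`
and `|X t| ≥ s` for every `t` in the span. -/
def IsCascade {V T : Type*} (Tr : SimpleGraph T) (X : T → Finset V) (h s : ℕ)
    (η : TVert h → T) : Prop :=
  IsHomeoEmb (Tgraph h) Tr η ∧
  (∀ l : MVert h, (X (η (Sum.inl l))).card = s) ∧
  (∀ t : T, inSpan Tr η t → s ≤ (X t).card)

/-- An injective cascade with common intersection set `I`. -/
def IsInjectiveCascade {V T : Type*} (Tr : SimpleGraph T) (X : T → Finset V) (h s : ℕ)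
    (η : TVert h → T) (I : Finset V) : Prop :=
  IsCascade Tr X h s η ∧ I.card < s ∧
  ∀ t t' : TVert h, t ≠ t' → ((X (η t) : Set V) ∩ (X (η t') : Set V)) = (I : Set V)

/-- A family of `s` disjoint paths in `G \ I` (a linkage). -/
def IsLinkage {V : Type*} (G : SimpleGraph V) (I : Finset V) {s : ℕ} {x y : Fin s → V}
    (P : ∀ i : Fin s, G.Walk (x i) (y i)) : Prop :=
  (∀ i, (P i).IsPath) ∧
  (∀ i, ∀ v ∈ (P i).support, v ∉ I) ∧
  (∀ i j, i ≠ j → ∀ v ∈ (P i).support, v ∉ (P j).support)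

/-- An ordered cascade: an injective cascade of size `s + |I|` with common intersection set
`I`, together with orderings `ξ t : Fin s → X (η t) \ I` of the bags at minor vertices, such
that at every major vertex there are left and right linkages connecting corresponding
vertices. -/
def IsOrderedCascade {V T : Type*} (G : SimpleGraph V) (Tr : SimpleGraph T)
    (X : T → Finset V) (h s : ℕ) (η : TVert h → T) (I : Finset V)
    (ξ : MVert h → Fin s → V) : Prop :=
  IsInjectiveCascade Tr X h (s + I.card) η I ∧
  (∀ t : MVert h, Function.Injective (ξ t) ∧
    Set.range (ξ t) = (X (η (Sum.inl t)) : Set V) \ (I : Set V)) ∧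
  ∀ (σ : List Bool) (hσ : σ.length + 1 ≤ h),
    (∃ P : ∀ i : Fin s,
        G.Walk (ξ ⟨σ, Nat.le_of_succ_le hσ⟩ i) (ξ ⟨false :: σ, by simpa using hσ⟩ i),
      IsLinkage G I P) ∧
    (∃ Q : ∀ i : Fin s,
        G.Walk (ξ ⟨σ, Nat.le_of_succ_le hσ⟩ i) (ξ ⟨true :: σ, by simpa using hσ⟩ i),
      IsLinkage G I Q)

/-- The vertex set of the `η`-torso at the major vertex `σ` of `T_h`: the union of the bags
`X t - I` over all `t` such that the path in `Tr` from `t` to `η σ` contains none of the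
images of the three minor neighbors of `σ` as an internal vertex. -/
def torsoSet {V T : Type*} (Tr : SimpleGraph T) (X : T → Finset V) {h : ℕ}
    (η : TVert h → T) (I : Finset V) (σ : List Bool) (hσ : σ.length + 1 ≤ h) : Set V :=
  {v | v ∉ I ∧ ∃ t : T,
    (∀ p : Tr.Walk t (η (Sum.inr ⟨σ, hσ⟩)), p.IsPath →
      ∀ u : T,
        (u = η (Sum.inl ⟨σ, Nat.le_of_succ_le hσ⟩) ∨
         u = η (Sum.inl ⟨false :: σ, by simpa using hσ⟩) ∨
         u = η (Sum.inl ⟨true :: σ, by simpa using hσ⟩)) →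
        u ∈ p.support → u = t ∨ u = η (Sum.inr ⟨σ, hσ⟩)) ∧
    v ∈ X t}

/-- `H` is a tripod in `G` with all vertices in `S`, center `c` and feet `f₁, f₂, f₃`:
the union of three paths from `c` to the feet, pairwise disjoint except for `c`,
at least two of which have length at least one. -/
def IsTripodOn {V : Type*} (G : SimpleGraph V) (S : Set V) (H : G.Subgraph)
    (c f₁ f₂ f₃ : V) : Prop :=
  ∃ (W₁ : G.Walk c f₁) (W₂ : G.Walk c f₂) (W₃ : G.Walk c f₃),
    W₁.IsPath ∧ W₂.IsPath ∧ W₃.IsPath ∧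
    (∀ v ∈ W₁.support, v ∈ S) ∧ (∀ v ∈ W₂.support, v ∈ S) ∧ (∀ v ∈ W₃.support, v ∈ S) ∧
    (∀ v, v ∈ W₁.support → v ∈ W₂.support → v = c) ∧
    (∀ v, v ∈ W₁.support → v ∈ W₃.support → v = c) ∧
    (∀ v, v ∈ W₂.support → v ∈ W₃.support → v = c) ∧
    ((1 ≤ W₁.length ∧ 1 ≤ W₂.length) ∨ (1 ≤ W₁.length ∧ 1 ≤ W₃.length) ∨
      (1 ≤ W₂.length ∧ 1 ≤ W₃.length)) ∧
    H = W₁.toSubgraph ⊔ W₂.toSubgraph ⊔ W₃.toSubgraph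

/-- The major vertex `σ` has property `A_{ij}` in the ordered cascade `η` with orderings
`ξ`: there are two disjoint tripods in the `η`-torso at `σ`, with feet as prescribed. -/
def HasPropA {V T : Type*} (G : SimpleGraph V) (Tr : SimpleGraph T) (X : T → Finset V)
    {h s : ℕ} (η : TVert h → T) (I : Finset V) (ξ : MVert h → Fin s → V)
    (σ : List Bool) (hσ : σ.length + 1 ≤ h) (i j : Fin s) : Prop :=
  ∃ (Li Lj : G.Subgraph) (ci cj : V),
    (∃ m₂ m₃ : Fin s, (m₂ = i ∨ m₂ = j) ∧ (m₃ = i ∨ m₃ = j) ∧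
      IsTripodOn G (torsoSet Tr X η I σ hσ) Li ci
        (ξ ⟨σ, Nat.le_of_succ_le hσ⟩ i)
        (ξ ⟨false :: σ, by simpa using hσ⟩ m₂)
        (ξ ⟨true :: σ, by simpa using hσ⟩ m₃)) ∧
    (∃ m₂ m₃ : Fin s, (m₂ = i ∨ m₂ = j) ∧ (m₃ = i ∨ m₃ = j) ∧
      IsTripodOn G (torsoSet Tr X η I σ hσ) Lj cj
        (ξ ⟨σ, Nat.le_of_succ_le hσ⟩ j)
        (ξ ⟨false :: σ, by simpa using hσ⟩ m₂)
        (ξ ⟨true :: σ, by simpa using hσ⟩ m₃)) ∧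
    Disjoint Li.verts Lj.verts

/-- The major vertex `σ` has property `B_{ij}`: there are two tripods `L_i`, `L_j` in the
`η`-torso at `σ`, with feet `v_{m,1}, v_{m,2}, v_{m,3}` where `{v_{i,y}, v_{j,y}}` equals
`{ξ_{t_y} i, ξ_{t_y} j}` for each `y`, which intersect exactly in a path that is the
intersection of the branch of `L_i` to `v_{i,3}` and the branch of `L_j` to `v_{j,2}`,
and which avoids both centers. -/
def HasPropB {V T : Type*} (G : SimpleGraph V) (Tr : SimpleGraph T) (X : T → Finset V)
    {h s : ℕ} (η : TVert h → T) (I : Finset V) (ξ : MVert h → Fin s → V)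
    (σ : List Bool) (hσ : σ.length + 1 ≤ h) (i j : Fin s) : Prop :=
  ∃ (vi vj : Fin 3 → V) (ci cj : V)
    (Wi : ∀ y : Fin 3, G.Walk ci (vi y)) (Wj : ∀ y : Fin 3, G.Walk cj (vj y)),
    (∀ y : Fin 3, ({vi y, vj y} : Set V) =
      {(![ξ ⟨σ, Nat.le_of_succ_le hσ⟩,
          ξ ⟨false :: σ, by simpa using hσ⟩,
          ξ ⟨true :: σ, by simpa using hσ⟩] : Fin 3 → Fin s → V) y i,
       (![ξ ⟨σ, Nat.le_of_succ_le hσ⟩,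
          ξ ⟨false :: σ, by simpa using hσ⟩,
          ξ ⟨true :: σ, by simpa using hσ⟩] : Fin 3 → Fin s → V) y j}) ∧
    (∀ y, (Wi y).IsPath) ∧ (∀ y, (Wj y).IsPath) ∧
    (∀ y, ∀ v ∈ (Wi y).support, v ∈ torsoSet Tr X η I σ hσ) ∧
    (∀ y, ∀ v ∈ (Wj y).support, v ∈ torsoSet Tr X η I σ hσ) ∧
    (∀ y y' : Fin 3, y ≠ y' → ∀ v, v ∈ (Wi y).support → v ∈ (Wi y').support → v = ci) ∧
    (∀ y y' : Fin 3, y ≠ y' → ∀ v, v ∈ (Wj y).support → v ∈ (Wj y').support → v = cj) ∧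
    ((1 ≤ (Wi 0).length ∧ 1 ≤ (Wi 1).length) ∨ (1 ≤ (Wi 0).length ∧ 1 ≤ (Wi 2).length) ∨
      (1 ≤ (Wi 1).length ∧ 1 ≤ (Wi 2).length)) ∧
    ((1 ≤ (Wj 0).length ∧ 1 ≤ (Wj 1).length) ∨ (1 ≤ (Wj 0).length ∧ 1 ≤ (Wj 2).length) ∨
      (1 ≤ (Wj 1).length ∧ 1 ≤ (Wj 2).length)) ∧
    (((Wi 0).toSubgraph ⊔ (Wi 1).toSubgraph ⊔ (Wi 2).toSubgraph) ⊓
      ((Wj 0).toSubgraph ⊔ (Wj 1).toSubgraph ⊔ (Wj 2).toSubgraph)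
        = (Wi 2).toSubgraph ⊓ (Wj 1).toSubgraph) ∧
    ∃ (x y : V) (p : G.Walk x y), p.IsPath ∧
      (Wi 2).toSubgraph ⊓ (Wj 1).toSubgraph = p.toSubgraph ∧
      ci ∉ p.support ∧ cj ∉ p.support

/-- The major vertex `σ` has property `AB_{ij}`: in the `η`-torso at `σ` there are disjoint
paths `L_i, L_j` from `ξ_{t₁}(m)` to `ξ_{t₂}(m)` and disjoint paths `R_i, R_j` from
`ξ_{t₁}(m)` to `ξ_{t₃}(m)`, for `m ∈ {i, j}`. -/
def HasPropAB {V T : Type*} (G : SimpleGraph V) (Tr : SimpleGraph T) (X : T → Finset V)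
    {h s : ℕ} (η : TVert h → T) (I : Finset V) (ξ : MVert h → Fin s → V)
    (σ : List Bool) (hσ : σ.length + 1 ≤ h) (i j : Fin s) : Prop :=
  ∃ (Li : G.Walk (ξ ⟨σ, Nat.le_of_succ_le hσ⟩ i) (ξ ⟨false :: σ, by simpa using hσ⟩ i))
    (Lj : G.Walk (ξ ⟨σ, Nat.le_of_succ_le hσ⟩ j) (ξ ⟨false :: σ, by simpa using hσ⟩ j))
    (Ri : G.Walk (ξ ⟨σ, Nat.le_of_succ_le hσ⟩ i) (ξ ⟨true :: σ, by simpa using hσ⟩ i))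
    (Rj : G.Walk (ξ ⟨σ, Nat.le_of_succ_le hσ⟩ j) (ξ ⟨true :: σ, by simpa using hσ⟩ j)),
    Li.IsPath ∧ Lj.IsPath ∧ Ri.IsPath ∧ Rj.IsPath ∧
    (∀ v ∈ Li.support, v ∈ torsoSet Tr X η I σ hσ) ∧
    (∀ v ∈ Lj.support, v ∈ torsoSet Tr X η I σ hσ) ∧
    (∀ v ∈ Ri.support, v ∈ torsoSet Tr X η I σ hσ) ∧
    (∀ v ∈ Rj.support, v ∈ torsoSet Tr X η I σ hσ) ∧
    (∀ v ∈ Li.support, v ∉ Lj.support) ∧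
    (∀ v ∈ Ri.support, v ∉ Rj.support)

/-- A monotone homeomorphic embedding `T_a ↪ T_h`: the minor root maps to the minor root,
and for every major vertex with trinity `(t₁, t₂, t₃)`, the images of `t₂` and `t₃` are the
left and right neighbors of the (major) image of the vertex. -/
def IsMonotoneEmb (a h : ℕ) (γ : TVert a → TVert h) : Prop :=
  IsHomeoEmb (Tgraph a) (Tgraph h) γ ∧
  γ (Sum.inl ⟨[], Nat.zero_le a⟩) = Sum.inl ⟨[], Nat.zero_le h⟩ ∧
  ∀ (σ : List Bool) (hσ : σ.length + 1 ≤ a),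
    ∃ (τ : List Bool) (hτ : τ.length + 1 ≤ h),
      γ (Sum.inr ⟨σ, hσ⟩) = Sum.inr ⟨τ, hτ⟩ ∧
      γ (Sum.inl ⟨false :: σ, by simpa using hσ⟩) = Sum.inl ⟨false :: τ, by simpa using hτ⟩ ∧
      γ (Sum.inl ⟨true :: σ, by simpa using hσ⟩) = Sum.inl ⟨true :: τ, by simpa using hτ⟩

/-!
A vertex of degree at most one may be deleted and restored at the end: a pendant vertex can be
attached anywhere to `𝒫_k` inside `𝒫_{2k+1}`, and likewise for `𝒬_k`. So suppose the minimum
degree is at least two.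

The key step is that some vertex `v` meets every cycle. Minimum degree three yields a `K_4`,
`K_{2,3}` or `C_{3,2}` minor, as the ends of a maximal path in the complement of a minimal cycle
send many edges back to that cycle. Hence some vertex `x` has its neighbors among two vertices
`y, z`. If `y, z` are not adjacent, suppress `x` and use induction. If they are, then `xyz` is a
triangle, every cycle meets it, and if each of its vertices is avoided by some cycle, then the
three resulting ears on the triangle give one of the four minors.

Now `H - v` is a forest whose leaves are all adjacent to `v`. A vertex of degree three in it would
have three disjoint paths to neighbors of `v`, giving `K_{2,3}`. So `H - v` is a linear forest and
`H` is a subgraph of a fan, which is a minor of both `𝒫_k` and `𝒬_k` for large `k`.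
-/

section Minors

variable {U V W : Type*} {F : SimpleGraph U} {G : SimpleGraph V} {H : SimpleGraph W}

/-- Two vertex sets are linked in `G` when some edge of `G` joins them. -/
def Linked (G : SimpleGraph V) (s t : Set V) : Prop := ∃ u ∈ s, ∃ v ∈ t, G.Adj u v

theorem Linked.symm {s t : Set V} : Linked G s t → Linked G t s :=
  fun ⟨u, hu, v, hv, huv⟩ ↦ ⟨v, hv, u, hu, huv.symm⟩

theorem Linked.mono {s s' t t' : Set V} (h : Linked G s t) (hs : s ⊆ s') (ht : t ⊆ t') :
    Linked G s' t' :=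
  let ⟨u, hu, v, hv, huv⟩ := h
  ⟨u, hs hu, v, ht hv, huv⟩

theorem linked_of_adj {s t : Set V} {u v : V} (huv : G.Adj u v) (hu : u ∈ s) (hv : v ∈ t) :
    Linked G s t :=
  ⟨u, hu, v, hv, huv⟩

theorem connected_induce_singleton (v : V) : (G.induce {v}).Connected :=
  ⟨Preconnected.of_subsingleton⟩

theorem connected_induce_insert {s : Set V} {u v : V} (hs : (G.induce s).Connected)
    (hv : v ∈ s) (huv : G.Adj u v) : (G.induce (insert u s)).Connected :=
  connected_induce_union (connected_induce_singleton u).preconnected hs.preconnected rfl hv huv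

theorem connected_induce_image {s : Set U} (φ : F →g G) (hs : (F.induce s).Connected) :
    (G.induce (φ '' s)).Connected :=
  hs.map (induceHom φ (Set.mapsTo_image φ s)) (Set.imageFactorization_surjective)

theorem connected_induce_biUnion {s : Set V} {g : V → Set U} (hs : (G.induce s).Connected)
    (hg : ∀ v ∈ s, (F.induce (g v)).Connected)
    (hadj : ∀ u v, G.Adj u v → Linked F (g u) (g v)) :
    (F.induce (⋃ v ∈ s, g v)).Connected := by
  have hsub (v : s) : g v ⊆ ⋃ v ∈ s, g v := Set.subset_biUnion_of_mem v.2
  have reach_within (v : s) (x y : U) (hx : x ∈ g v) (hy : y ∈ g v) :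
      (F.induce (⋃ v ∈ s, g v)).Reachable ⟨x, hsub v hx⟩ ⟨y, hsub v hy⟩ :=
    ((hg v v.2).preconnected ⟨x, hx⟩ ⟨y, hy⟩).map (induceHomOfLE F (hsub v)).toHom
  have reach_along (u v : s) (p : (G.induce s).Walk u v) : ∀ x (hx : x ∈ g u) y (hy : y ∈ g v),
      (F.induce (⋃ v ∈ s, g v)).Reachable ⟨x, hsub u hx⟩ ⟨y, hsub v hy⟩ := by
    induction p with
    | nil => exact fun x hx y hy ↦ reach_within _ x y hx hy
    | @cons u v w huv _ ih =>
      intro x hx y hy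
      obtain ⟨u', hu', v', hv', hadj'⟩ := hadj u v huv
      have step : (F.induce (⋃ v ∈ s, g v)).Adj ⟨u', hsub u hu'⟩ ⟨v', hsub v hv'⟩ := hadj'
      exact (reach_within u x u' hx hu').trans (step.reachable.trans (ih v' hv' y hy))
  obtain ⟨v₀⟩ := hs.nonempty
  obtain ⟨x₀, hx₀⟩ := (hg v₀ v₀.2).nonempty
  rw [connected_iff_exists_forall_reachable]
  refine ⟨⟨x₀, hsub v₀ hx₀⟩, fun ⟨y, hy⟩ ↦ ?_⟩
  obtain ⟨v, hv, hyv⟩ := Set.mem_iUnion₂.mp hy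
  obtain ⟨p⟩ := hs.preconnected v₀ ⟨v, hv⟩
  exact reach_along v₀ ⟨v, hv⟩ p x₀ hx₀ y hyv

theorem isMinorModel_of_connected {f : W → Set V} (hconn : ∀ w, (G.induce (f w)).Connected)
    (hdisj : Pairwise fun w₁ w₂ ↦ Disjoint (f w₁) (f w₂))
    (hadj : ∀ w₁ w₂, H.Adj w₁ w₂ → Linked G (f w₁) (f w₂)) : IsMinorModel H G f :=
  ⟨fun w ↦ Set.nonempty_coe_sort.mp (hconn w).nonempty, hconn, fun _ _ h ↦ hdisj h, hadj⟩

theorem IsMinorModel.connected {f : W → Set V} (hf : IsMinorModel H G f) (w : W) :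
    (G.induce (f w)).Connected :=
  hf.2.1 w

theorem IsMinorModel.disjoint {f : W → Set V} (hf : IsMinorModel H G f) {w₁ w₂ : W}
    (hne : w₁ ≠ w₂) : Disjoint (f w₁) (f w₂) :=
  hf.2.2.1 w₁ w₂ hne

theorem IsMinorModel.linked {f : W → Set V} (hf : IsMinorModel H G f) {w₁ w₂ : W}
    (hw : H.Adj w₁ w₂) : Linked G (f w₁) (f w₂) :=
  hf.2.2.2 w₁ w₂ hw

theorem IsMinor.trans (hHG : IsMinor H G) (hGF : IsMinor G F) : IsMinor H F := by
  obtain ⟨f, hf⟩ := hHG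
  obtain ⟨g, hg⟩ := hGF
  refine ⟨fun w ↦ ⋃ v ∈ f w, g v, isMinorModel_of_connected (fun w ↦
    connected_induce_biUnion (hf.connected w) (fun v _ ↦ hg.connected v) fun _ _ ↦ hg.linked) ?_ ?_⟩
  · intro w₁ w₂ hne
    simp only [Set.disjoint_iUnion_left, Set.disjoint_iUnion_right]
    exact fun v₂ hv₂ v₁ hv₁ ↦ hg.disjoint ((hf.disjoint hne).ne_of_mem hv₁ hv₂)
  · intro w₁ w₂ hw
    obtain ⟨v₁, hv₁, v₂, hv₂, hv⟩ := hf.linked hw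
    exact (hg.linked hv).mono (Set.subset_biUnion_of_mem hv₁) (Set.subset_biUnion_of_mem hv₂)

theorem isMinor_of_isContained (h : H ⊑ G) : IsMinor H G := by
  obtain ⟨f⟩ := h
  refine ⟨fun w ↦ {f w}, isMinorModel_of_connected (fun w ↦ connected_induce_singleton _) ?_ ?_⟩
  · exact fun w₁ w₂ hne ↦ Set.disjoint_singleton.mpr (f.injective.ne hne)
  · exact fun w₁ w₂ hw ↦ linked_of_adj (f.toHom.map_adj hw) rfl rfl

/-- A connector between `A` and `B` is a connected set `C`, disjoint from both and linked to both:
contracting it yields a vertex adjacent to both sides. -/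
structure IsConnector (G : SimpleGraph V) (A B C : Set V) : Prop where
  connected : (G.induce C).Connected
  disjoint_left : Disjoint C A
  disjoint_right : Disjoint C B
  linked_left : Linked G C A
  linked_right : Linked G C B

theorem IsConnector.symm {A B C : Set V} (h : IsConnector G A B C) : IsConnector G B A C :=
  ⟨h.connected, h.disjoint_right, h.disjoint_left, h.linked_right, h.linked_left⟩

theorem isConnector_singleton {A B : Set V} {v a b : V} (hA : v ∉ A) (hB : v ∉ B)
    (ha : a ∈ A) (hb : b ∈ B) (hva : G.Adj v a) (hvb : G.Adj v b) : IsConnector G A B {v} where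
  connected := connected_induce_singleton v
  disjoint_left := Set.disjoint_singleton_left.mpr hA
  disjoint_right := Set.disjoint_singleton_left.mpr hB
  linked_left := linked_of_adj hva rfl ha
  linked_right := linked_of_adj hvb rfl hb

theorem pairwise_disjoint_triple {A B C : Set V} (hAB : Disjoint A B) (hAC : Disjoint A C)
    (hBC : Disjoint B C) : Pairwise fun i j ↦ Disjoint (![A, B, C] i) (![A, B, C] j) := by
  intro i j hij
  fin_cases i <;> fin_cases j <;>
    first | exact absurd rfl hij | assumption | (apply Disjoint.symm; assumption)

theorem isMinor_K23_of_connectors {A B : Set V} {C : Fin 3 → Set V}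
    (hA : (G.induce A).Connected) (hB : (G.induce B).Connected) (hAB : Disjoint A B)
    (hC : ∀ i, IsConnector G A B (C i)) (hdisj : Pairwise fun i j ↦ Disjoint (C i) (C j)) :
    IsMinor K23 G := by
  refine ⟨Sum.elim ![A, B] C, isMinorModel_of_connected ?_ ?_ ?_⟩
  · rintro (i | i)
    · fin_cases i <;> assumption
    · exact (hC i).connected
  · rintro (i | i) (j | j) hne
    · fin_cases i <;> fin_cases j <;> first | exact absurd rfl hne | exact hAB | exact hAB.symm
    · fin_cases i
      exacts [(hC j).disjoint_left.symm, (hC j).disjoint_right.symm]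
    · fin_cases j
      exacts [(hC i).disjoint_left, (hC i).disjoint_right]
    · exact hdisj fun h ↦ hne (congrArg Sum.inr h)
  · rintro (i | i) (j | j) hij
    · simp [K23] at hij
    · fin_cases i
      exacts [(hC j).linked_left.symm, (hC j).linked_right.symm]
    · fin_cases j
      exacts [(hC i).linked_left, (hC i).linked_right]
    · simp [K23] at hij

theorem isMinorModel_top_cons {n : ℕ} {D : Set V} {T : Fin n → Set V}
    (hT : IsMinorModel ⊤ G T) (hD : (G.induce D).Connected) (hdisj : ∀ i, Disjoint D (T i))
    (hlink : ∀ i, Linked G D (T i)) : IsMinorModel ⊤ G (Fin.cons D T : Fin (n + 1) → Set V) := by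
  refine isMinorModel_of_connected (Fin.cases hD hT.connected) ?_ ?_
  · intro i j
    induction i using Fin.cases <;> induction j using Fin.cases <;>
      simp +contextual [hdisj, hT.disjoint, disjoint_comm]
  · intro i j
    induction i using Fin.cases <;> induction j using Fin.cases <;>
      simp +contextual [hlink, Linked.symm, hT.linked]

theorem isMinor_C32_of_disjoint_triangles {S T : Fin 3 → Set V} (hS : IsMinorModel ⊤ G S)
    (hT : IsMinorModel ⊤ G T) (hdisj : ∀ i j, Disjoint (S i) (T j)) : IsMinor C32 G := by
  refine ⟨fun w ↦ (![S, T] w.1) w.2, isMinorModel_of_connected ?_ ?_ ?_⟩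
  · rintro ⟨i, j⟩
    fin_cases i
    exacts [hS.connected j, hT.connected j]
  · rintro ⟨i, j⟩ ⟨i', j'⟩ hne
    fin_cases i <;> fin_cases i'
    exacts [hS.disjoint (by simpa using hne), hdisj j j', (hdisj j' j).symm,
      hT.disjoint (by simpa using hne)]
  · rintro ⟨i, j⟩ ⟨i', j'⟩ ⟨hne, hi⟩
    obtain rfl : i = i' := hi.elim id Eq.symm
    have hj : j ≠ j' := by simpa using hne
    fin_cases i
    exacts [hS.linked hj, hT.linked hj]

theorem isMinor_graphA_of_triangle {T E : Fin 3 → Set V} (hT : IsMinorModel ⊤ G T)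
    (hE : ∀ i, IsConnector G (T i) (T (i + 1)) (E i)) (hopp : ∀ i, Disjoint (E i) (T (i + 2)))
    (hdisj : Pairwise fun i j ↦ Disjoint (E i) (E j)) : IsMinor graphA G := by
  have hET (i j : Fin 3) : Disjoint (E i) (T j) := by
    have : ∀ i j : Fin 3, j = i ∨ j = i + 1 ∨ j = i + 2 := by decide
    obtain rfl | rfl | rfl := this i j
    exacts [(hE _).disjoint_left, (hE _).disjoint_right, hopp _]
  have hTT {i j : Fin 3} (hij : i ≠ j) : Linked G (T i) (T j) := hT.linked hij
  have hET_link {i j : Fin 3} : j = i ∨ j = i + 1 → Linked G (E i) (T j) := by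
    rintro (rfl | rfl)
    exacts [(hE _).linked_left, (hE _).linked_right]
  let part : Fin 6 → Fin 3 ⊕ Fin 3 := ![.inl 0, .inr 0, .inl 1, .inr 1, .inl 2, .inr 2]
  have part_injective : part.Injective := by decide
  refine ⟨Sum.elim T E ∘ part, isMinorModel_of_connected ?_ ?_ ?_⟩
  · have (a : Fin 3 ⊕ Fin 3) : (G.induce (Sum.elim T E a)).Connected :=
      a.rec hT.connected fun i ↦ (hE i).connected
    exact fun k ↦ this (part k)
  · refine Pairwise.comp_of_injective (r := fun a b ↦ Disjoint (Sum.elim T E a) (Sum.elim T E b))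
      ?_ part_injective
    rintro (i | i) (j | j) hne
    exacts [hT.disjoint (by simpa using hne), (hET j i).symm, hET i j,
      hdisj (by simpa using hne)]
  · intro k l hkl
    fin_cases k <;> fin_cases l <;> simp [graphA] at hkl
    all_goals first
      | exact hTT (by decide)
      | exact hET_link (by decide)
      | exact (hET_link (by decide)).symm

end Minors

section Walks

variable {V : Type*} {G : SimpleGraph V}

theorem connected_support {u v : V} (p : G.Walk u v) : (G.induce {w | w ∈ p.support}).Connected :=
  p.connected_induce_support

theorem exists_connected_subset_diff_linked {S P : Set V} {a : V} (hS : (G.induce S).Connected)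
    (haS : a ∈ S) (haP : a ∉ P) (hSP : (S ∩ P).Nonempty) :
    ∃ S' ⊆ S \ P, (G.induce S').Connected ∧ a ∈ S' ∧ Linked G S' (S ∩ P) := by
  obtain ⟨b, hbS, hbP⟩ := hSP
  obtain ⟨p⟩ := hS.preconnected ⟨a, haS⟩ ⟨b, hbS⟩
  suffices ∀ u v : S, (G.induce S).Walk u v → u.1 ∉ P → v.1 ∈ P →
      ∃ S' ⊆ S \ P, (G.induce S').Connected ∧ u.1 ∈ S' ∧ Linked G S' (S ∩ P) from
    this _ _ p haP hbP
  intro u v q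
  induction q with
  | nil => exact fun hu hu' ↦ absurd hu' hu
  | @cons u w v huw _ ih =>
    intro hu hv
    by_cases hw : w.1 ∈ P
    · exact ⟨{u.1}, Set.singleton_subset_iff.mpr ⟨u.2, hu⟩, connected_induce_singleton _, rfl,
        linked_of_adj huw rfl ⟨w.2, hw⟩⟩
    · obtain ⟨S', hS', hconn, hwS', hlink⟩ := ih hw hv
      exact ⟨insert u.1 S', Set.insert_subset ⟨u.2, hu⟩ hS', connected_induce_insert hconn hwS' huw,
        Set.mem_insert _ _, hlink.mono (Set.subset_insert _ _) subset_rfl⟩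

theorem exists_connected_subset_inter_eq_singleton {S P : Set V} {a : V}
    (hS : (G.induce S).Connected) (haS : a ∈ S) (hSP : (S ∩ P).Nonempty) :
    ∃ S' ⊆ S, (G.induce S').Connected ∧ a ∈ S' ∧ ∃ u, S' ∩ P = {u} := by
  by_cases haP : a ∈ P
  · exact ⟨{a}, by simpa using haS, connected_induce_singleton a, rfl, a, by simpa using haP⟩
  · obtain ⟨S', hS', hconn, haS', w, hw, u, hu, hwu⟩ :=
      exists_connected_subset_diff_linked hS haS haP hSP
    have hS'P : S' ∩ P = ∅ := (Set.subset_sdiff.mp hS').2.inter_eq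
    exact ⟨insert u S', Set.insert_subset hu.1 fun x hx ↦ (hS' hx).1,
      connected_induce_insert hconn hw hwu.symm, Set.mem_insert_of_mem _ haS', u,
      by rw [Set.insert_inter_of_mem hu.2, hS'P, insert_empty_eq]⟩

/-- A splitting of the support of the path `p` into an initial segment `S` and a final
segment `T`. -/
structure IsPathSplitting {a b : V} (p : G.Walk a b) (S T : Set V) : Prop where
  connected_left : (G.induce S).Connected
  connected_right : (G.induce T).Connected
  disjoint : Disjoint S T
  union_eq : S ∪ T = {v | v ∈ p.support}
  start_mem : a ∈ S
  end_mem : b ∈ T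
  linked : Linked G S T

theorem exists_isPathSplitting {a b u w : V} {p : G.Walk a b} (hp : p.IsPath) (hu : u ∈ p.support)
    (hw : w ∈ p.support) (huw : u ≠ w) :
    ∃ S T, IsPathSplitting p S T ∧ (u ∈ S ∧ w ∈ T ∨ w ∈ S ∧ u ∈ T) := by
  induction p with
  | nil => simp_all
  | @cons a c b hac p ih =>
    obtain ⟨hp, ha⟩ := (Walk.cons_isPath_iff hac p).mp hp
    simp only [Walk.support_cons, List.mem_cons] at hu hw
    by_cases hends : u = a ∨ w = a
    · refine ⟨{a}, {v | v ∈ p.support}, ⟨connected_induce_singleton a, connected_support p,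
        by simpa using ha, ?_, rfl, p.end_mem_support,
        linked_of_adj hac rfl p.start_mem_support⟩, ?_⟩
      · ext; simp
      · rcases hends with rfl | rfl
        · exact .inl ⟨rfl, hw.resolve_left huw.symm⟩
        · exact .inr ⟨rfl, hu.resolve_left huw⟩
    · push Not at hends
      obtain ⟨S, T, h, hmem⟩ := ih hp (hu.resolve_left hends.1) (hw.resolve_left hends.2)
      have haT : a ∉ T := fun haT ↦ ha (h.union_eq.subset (Or.inr haT))
      refine ⟨insert a S, T, ⟨connected_induce_insert h.connected_left h.start_mem hac,
        h.connected_right, Set.disjoint_insert_left.mpr ⟨haT, h.disjoint⟩, ?_,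
        Set.mem_insert _ _, h.end_mem, h.linked.mono (Set.subset_insert _ _) subset_rfl⟩,
        hmem.imp (.imp_left .inr) (.imp_left .inr)⟩
      rw [Set.insert_union, h.union_eq]
      ext; simp

/-- An ear at `y`: a path avoiding `y` whose two distinct ends are adjacent to `y`, that is, a
cycle through `y` with `y` removed. -/
structure IsEar (y : V) {a b : V} (r : G.Walk a b) : Prop where
  isPath : r.IsPath
  ne : a ≠ b
  notMem : y ∉ r.support
  adj_start : G.Adj y a
  adj_end : G.Adj y b

theorem exists_isEar_of_isCycle {u y : V} {c : G.Walk u u} (hc : c.IsCycle) (hy : y ∈ c.support) :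
    ∃ (a b : V) (r : G.Walk a b), IsEar y r ∧ ∀ w, w ∈ c.support ↔ w ∈ y :: r.support := by
  classical
  suffices ∀ d : G.Walk y y, d.IsCycle →
      ∃ (a b : V) (r : G.Walk a b), IsEar y r ∧ ∀ w, w ∈ d.support ↔ w ∈ y :: r.support by
    simpa only [Walk.mem_support_rotate_iff] using
      this (c.rotate y hy) ((Walk.isCycle_rotate hy).mpr hc)
  rintro (_ | ⟨hya, p⟩) hd
  · exact absurd hd Walk.not_isCycle_nil
  rw [Walk.cons_isCycle_iff] at hd
  obtain ⟨q, rfl⟩ : ∃ q, p = Walk.reverse q := ⟨p.reverse, p.reverse_reverse.symm⟩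
  rw [Walk.isPath_reverse_iff, Walk.edges_reverse, List.mem_reverse] at hd
  obtain _ | ⟨hyb, r⟩ := q
  · exact absurd rfl hya.ne
  obtain ⟨hr, hyr⟩ := (Walk.cons_isPath_iff hyb r).mp hd.1
  refine ⟨_, _, r, ⟨hr, ?_, hyr, hyb, hya⟩, fun w ↦ ?_⟩
  · rintro rfl
    exact hd.2 (by simp)
  · have := r.start_mem_support
    simp only [Walk.support_cons, Walk.support_reverse, List.mem_cons, List.mem_reverse]
    grind

theorem exists_splitting_at_interior {a b u : V} {p : G.Walk a b} (hp : p.IsPath)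
    (hu : u ∈ p.support) (hua : u ≠ a) (hub : u ≠ b) :
    ∃ S ⊆ {v | v ∈ p.support} \ {u}, ∃ T ⊆ {v | v ∈ p.support} \ {u}, Disjoint S T ∧
      (G.induce S).Connected ∧ (G.induce T).Connected ∧ a ∈ S ∧ b ∈ T ∧
      Linked G S {u} ∧ Linked G T {u} := by
  obtain ⟨q, r, rfl⟩ := Walk.mem_support_iff_exists_append.mp hu
  have segment {c d : V} (s : G.Walk c d) (x : V) (hx : x ∈ s.support) (hus : u ∈ s.support)
      (hxu : x ≠ u) : ∃ S ⊆ {v | v ∈ s.support} \ {u}, (G.induce S).Connected ∧ x ∈ S ∧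
        Linked G S {u} := by
    obtain ⟨S, hS, hconn, hxS, hlink⟩ := exists_connected_subset_diff_linked (P := {u})
      (connected_support s) hx hxu ⟨u, hus, rfl⟩
    exact ⟨S, hS, hconn, hxS, hlink.mono subset_rfl Set.inter_subset_right⟩
  obtain ⟨S, hS, hS_conn, haS, hSu⟩ := segment q a q.start_mem_support q.end_mem_support hua.symm
  obtain ⟨T, hT, hT_conn, hbT, hTu⟩ := segment r b r.end_mem_support r.start_mem_support hub.symm
  refine ⟨S, hS.trans ?_, T, hT.trans ?_, ?_, hS_conn, hT_conn, haS, hbT, hSu, hTu⟩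
  · exact Set.sdiff_subset_sdiff_left fun v hv ↦ Walk.support_subset_support_append_left q r hv
  · exact Set.sdiff_subset_sdiff_left fun v hv ↦ Walk.support_subset_support_append_right q r hv
  · refine Set.disjoint_left.mpr fun v hvS hvT ↦ ?_
    exact hp.ne_of_mem_support_of_append (hT hvT).2 (hS hvS).1 (hT hvT).1 rfl

theorem isMinorModel_triangle {A B C : Set V} (hA : (G.induce A).Connected)
    (hB : (G.induce B).Connected) (hC : (G.induce C).Connected) (hAB : Disjoint A B)
    (hAC : Disjoint A C) (hBC : Disjoint B C) (lAB : Linked G A B) (lAC : Linked G A C)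
    (lBC : Linked G B C) : IsMinorModel (⊤ : SimpleGraph (Fin 3)) G ![A, B, C] := by
  refine isMinorModel_of_connected ?_ (pairwise_disjoint_triple hAB hAC hBC) ?_
  · intro i; fin_cases i <;> assumption
  · intro i j hij
    fin_cases i <;> fin_cases j <;>
      first | exact absurd rfl hij.ne | assumption | (apply Linked.symm; assumption)

theorem IsEar.exists_triangle {y a b u w : V} {r : G.Walk a b} (hr : IsEar y r)
    (hu : u ∈ r.support) (hw : w ∈ r.support) (huw : u ≠ w) :
    ∃ T : Fin 3 → Set V, IsMinorModel ⊤ G T ∧ (∀ i, ∀ v ∈ T i, v ∈ y :: r.support) ∧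
      T 0 = {y} ∧ u ∈ T 1 ∧ w ∈ T 2 := by
  obtain ⟨S, T, h, hmem⟩ := exists_isPathSplitting hr.isPath hu hw huw
  have hS : ∀ v ∈ S, v ∈ r.support := fun v hv ↦ h.union_eq.subset (.inl hv)
  have hT : ∀ v ∈ T, v ∈ r.support := fun v hv ↦ h.union_eq.subset (.inr hv)
  have hyS : Disjoint {y} S := Set.disjoint_singleton_left.mpr fun hy ↦ hr.notMem (hS y hy)
  have hyT : Disjoint {y} T := Set.disjoint_singleton_left.mpr fun hy ↦ hr.notMem (hT y hy)
  have lyS : Linked G {y} S := linked_of_adj hr.adj_start rfl h.start_mem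
  have lyT : Linked G {y} T := linked_of_adj hr.adj_end rfl h.end_mem
  rcases hmem with ⟨hu, hw⟩ | ⟨hw, hu⟩
  · refine ⟨![{y}, S, T], isMinorModel_triangle (connected_induce_singleton y) h.connected_left
      h.connected_right hyS hyT h.disjoint lyS lyT h.linked, ?_, rfl, hu, hw⟩
    simp +contextual [Fin.forall_fin_succ, hS, hT]
  · refine ⟨![{y}, T, S], isMinorModel_triangle (connected_induce_singleton y) h.connected_right
      h.connected_left hyT hyS h.disjoint.symm lyT lyS h.linked.symm, ?_, rfl, hu, hw⟩
    simp +contextual [Fin.forall_fin_succ, hS, hT]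

theorem exists_triangle_of_isCycle {x u v w : V} {c : G.Walk x x} (hc : c.IsCycle)
    (hu : u ∈ c.support) (hv : v ∈ c.support) (hw : w ∈ c.support) (huv : u ≠ v) (huw : u ≠ w)
    (hvw : v ≠ w) :
    ∃ T : Fin 3 → Set V, IsMinorModel ⊤ G T ∧ (∀ i, ∀ v ∈ T i, v ∈ c.support) ∧
      u ∈ T 0 ∧ v ∈ T 1 ∧ w ∈ T 2 := by
  obtain ⟨a, b, r, hr, hsupp⟩ := exists_isEar_of_isCycle hc hu
  obtain ⟨T, hT, hTr, hT0, hvT, hwT⟩ := hr.exists_triangle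
    (List.mem_of_ne_of_mem huv.symm ((hsupp v).mp hv))
    (List.mem_of_ne_of_mem huw.symm ((hsupp w).mp hw)) hvw
  exact ⟨T, hT, fun i v hv ↦ (hsupp v).mpr (hTr i v hv), hT0 ▸ rfl, hvT, hwT⟩

theorem exists_triangle_of_isCycle_of_ne {x u v : V} {c : G.Walk x x} (hc : c.IsCycle)
    (hu : u ∈ c.support) (hv : v ∈ c.support) (huv : u ≠ v) :
    ∃ T : Fin 3 → Set V, IsMinorModel ⊤ G T ∧ (∀ i, ∀ v ∈ T i, v ∈ c.support) ∧
      u ∈ T 0 ∧ v ∈ T 1 := by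
  obtain ⟨w, hw, huw, hvw⟩ : ∃ w ∈ c.support, u ≠ w ∧ v ≠ w := by
    obtain ⟨a, b, r, hr, hsupp⟩ := exists_isEar_of_isCycle hc hu
    by_cases hva : v = a
    · exact ⟨b, (hsupp b).mpr (.tail _ r.end_mem_support), hr.adj_end.ne, hva ▸ hr.ne⟩
    · exact ⟨a, (hsupp a).mpr (.tail _ r.start_mem_support), hr.adj_start.ne, hva⟩
  obtain ⟨T, hT, hTc, huT, hvT, -⟩ := exists_triangle_of_isCycle hc hu hv hw huv huw hvw
  exact ⟨T, hT, hTc, huT, hvT⟩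

theorem isMinor_C32_of_isEar {y z a b c d : V} {r : G.Walk a b} {p : G.Walk c d}
    (hr : IsEar y r) (hp : IsEar z p) (hdisj : (y :: r.support).Disjoint (z :: p.support)) :
    IsMinor C32 G := by
  obtain ⟨S, hS, hSr, -⟩ := hr.exists_triangle r.start_mem_support r.end_mem_support hr.ne
  obtain ⟨T, hT, hTp, -⟩ := hp.exists_triangle p.start_mem_support p.end_mem_support hp.ne
  exact isMinor_C32_of_disjoint_triangles hS hT fun i j ↦
    Set.disjoint_left.mpr fun v hvS hvT ↦ hdisj (hSr i v hvS) (hTp j v hvT)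

theorem isMinor_C32_of_isCycle {u v : V} {c : G.Walk u u} {d : G.Walk v v} (hc : c.IsCycle)
    (hd : d.IsCycle) (hdisj : c.support.Disjoint d.support) : IsMinor C32 G := by
  obtain ⟨a, b, r, hr, hcr⟩ := exists_isEar_of_isCycle hc c.start_mem_support
  obtain ⟨a', b', p, hp, hdp⟩ := exists_isEar_of_isCycle hd d.start_mem_support
  exact isMinor_C32_of_isEar hr hp fun w hwr hwp ↦ hdisj ((hcr w).mpr hwr) ((hdp w).mpr hwp)

end Walks

section Forests

variable {V : Type*} {G : SimpleGraph V}

theorem isCycle_induce_iff {s : Set V} {u : V} {c : G.Walk u u} (hc : ∀ v ∈ c.support, v ∈ s) :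
    (c.induce s hc).IsCycle ↔ c.IsCycle := by
  rw [← Walk.isCycle_map_iff_of_injective (f := (Embedding.induce s).toHom)
    Subtype.val_injective, Walk.map_induce]
  rfl

theorem not_isAcyclic_induce_iff {s : Set V} :
    ¬ (G.induce s).IsAcyclic ↔ ∃ u, ∃ c : G.Walk u u, c.IsCycle ∧ ∀ w ∈ c.support, w ∈ s := by
  refine ⟨fun h ↦ ?_, fun ⟨u, c, hc, hcs⟩ h ↦ h _ ((isCycle_induce_iff hcs).mpr hc)⟩
  simp only [IsAcyclic, not_forall, not_not] at h
  obtain ⟨u, c, hc⟩ := h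
  refine ⟨_, c.map (Embedding.induce s).toHom,
    (Walk.isCycle_map_iff_of_injective Subtype.val_injective).mpr hc, fun w hw ↦ ?_⟩
  rw [Walk.support_map, List.mem_map] at hw
  obtain ⟨x, -, rfl⟩ := hw
  exact x.2

theorem exists_isPath_leaf_ends [Finite V] [Nonempty V] (hG : G.IsAcyclic) :
    ∃ (u v : V) (p : G.Walk u v), p.IsPath ∧ G.neighborSet u ⊆ {p.snd} ∧
      G.neighborSet v ⊆ {p.penultimate} := by
  obtain ⟨u, v, p, hp, hmax⟩ := Walk.exists_isPath_forall_isPath_length_le_length G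
  refine ⟨u, v, p, hp, fun x hux ↦ hG.eq_snd_of_adj_start hp hux ?_,
    fun x hvx ↦ hG.eq_penultimate_of_adj_end hp hvx ?_⟩
  · by_contra hx
    have hlonger := hmax _ _ _ (hp.cons hx (h := G.adj_symm hux))
    rw [Walk.length_cons] at hlonger
    omega
  · by_contra hx
    have hadj : G.Adj v x := hvx
    have hlonger := hmax _ _ _ (hp.concat hx hadj)
    rw [Walk.length_concat] at hlonger
    omega

theorem exists_append_isPath_leaf_end [Finite V] (hG : G.IsAcyclic) {u v : V} {p : G.Walk u v}
    (hp : p.IsPath) :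
    ∃ (w : V) (q : G.Walk v w), (p.append q).IsPath ∧
      G.neighborSet w ⊆ {(p.append q).penultimate} := by
  have := Fintype.ofFinite V
  induction hn : Fintype.card V - p.length generalizing v with
  | zero => have := hp.length_lt; omega
  | succ n ih =>
    by_cases hv : G.neighborSet v ⊆ {p.penultimate}
    · exact ⟨v, .nil, by simpa using hp, by simpa using hv⟩
    · obtain ⟨x, hvx, hx⟩ := Set.not_subset.mp hv
      have hxp : x ∉ p.support := fun hxp ↦ hx (hG.eq_penultimate_of_adj_end hp hvx hxp)
      have hadj : G.Adj v x := hvx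
      obtain ⟨w, q, hpq, hw⟩ := ih (hp.concat hxp hadj) (by rw [Walk.length_concat]; omega)
      rw [Walk.concat_append] at hpq hw
      exact ⟨w, _, hpq, hw⟩

end Forests

section MinDegree

variable {V : Type*} {G : SimpleGraph V}

theorem IsEar.exists_isCycle {y a b : V} {r : G.Walk a b} (hr : IsEar y r) :
    ∃ c : G.Walk y y, c.IsCycle ∧ ∀ w, w ∈ c.support ↔ w ∈ y :: r.support := by
  refine ⟨.cons hr.adj_start (r.concat hr.adj_end.symm), ?_, fun w ↦ ?_⟩
  · rw [Walk.cons_isCycle_iff, Walk.edges_concat, List.concat_eq_append, List.mem_append,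
      List.mem_singleton]
    refine ⟨hr.isPath.concat hr.notMem _, ?_⟩
    rintro (hya | hya)
    · exact hr.notMem (r.fst_mem_support_of_mem_edges hya)
    · have := hr.ne
      grind
  · simp only [Walk.support_cons, Walk.support_concat, List.mem_cons,
      List.mem_append, List.not_mem_nil, or_false]
    tauto

theorem exists_chordless_isEar (hG : ¬ G.IsAcyclic) :
    ∃ (y a b : V) (r : G.Walk a b), IsEar y r ∧ ∀ t ∈ r.support, G.Adj y t → t = a ∨ t = b := by
  classical
  have hex : ∃ (n : ℕ) (y a b : V) (r : G.Walk a b), IsEar y r ∧ r.length = n := by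
    simp only [IsAcyclic, not_forall, not_not] at hG
    obtain ⟨y, c, hc⟩ := hG
    obtain ⟨a, b, r, hr, -⟩ := exists_isEar_of_isCycle hc c.start_mem_support
    exact ⟨_, y, a, b, r, hr, rfl⟩
  obtain ⟨y, a, b, r, hr, hlen⟩ := Nat.find_spec hex
  refine ⟨y, a, b, r, hr, fun t ht hyt ↦ ?_⟩
  by_contra! hne
  have hr' : IsEar y (r.takeUntil t ht) :=
    ⟨hr.isPath.takeUntil ht, hne.1.symm,
      fun hy ↦ hr.notMem (r.support_takeUntil_subset_support ht hy), hr.adj_start, hyt⟩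
  refine Nat.find_min hex ?_ ⟨y, a, t, _, hr', rfl⟩
  exact hlen ▸ Walk.length_takeUntil_lt_length ht hne.2

theorem isMinor_K4_of_three_attachments {x i j k : V} {c : G.Walk x x} {D : Set V} (hc : c.IsCycle)
    (hD : (G.induce D).Connected) (hDc : ∀ v ∈ D, v ∉ c.support) (hi : i ∈ c.support)
    (hj : j ∈ c.support) (hk : k ∈ c.support) (hij : i ≠ j) (hik : i ≠ k) (hjk : j ≠ k)
    (hDi : Linked G D {i}) (hDj : Linked G D {j}) (hDk : Linked G D {k}) : IsMinor K4 G := by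
  obtain ⟨T, hT, hTc, hi, hj, hk⟩ := exists_triangle_of_isCycle hc hi hj hk hij hik hjk
  refine ⟨_, isMinorModel_top_cons hT hD (fun l ↦ ?_) (Fin.forall_fin_succ.mpr ⟨?_, ?_⟩)⟩
  · exact Set.disjoint_left.mpr fun v hvD hvT ↦ hDc v hvD (hTc l v hvT)
  · exact hDi.mono subset_rfl (Set.singleton_subset_iff.mpr hi)
  · exact Fin.forall_fin_two.mpr ⟨hDj.mono subset_rfl (Set.singleton_subset_iff.mpr hj),
      hDk.mono subset_rfl (Set.singleton_subset_iff.mpr hk)⟩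

theorem isMinor_K23_of_two_attachments {x i j u w : V} {c : G.Walk x x} (hc : c.IsCycle)
    (hi : i ∈ c.support) (hj : j ∈ c.support) (hij : i ≠ j) (hu : u ∉ c.support)
    (hw : w ∉ c.support) (huw : u ≠ w) (hui : G.Adj u i) (huj : G.Adj u j) (hwi : G.Adj w i)
    (hwj : G.Adj w j) : IsMinor K23 G := by
  obtain ⟨T, hT, hTc, hi, hj⟩ := exists_triangle_of_isCycle_of_ne hc hi hj hij
  have connector {v : V} (hv : v ∉ c.support) (hvi : G.Adj v i) (hvj : G.Adj v j) :
      IsConnector G (T 0) (T 1) {v} :=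
    isConnector_singleton (fun h ↦ hv (hTc 0 v h)) (fun h ↦ hv (hTc 1 v h)) hi hj hvi hvj
  have connector_T : IsConnector G (T 0) (T 1) (T 2) :=
    ⟨hT.connected 2, hT.disjoint (by decide), hT.disjoint (by decide), hT.linked (by simp),
      hT.linked (by simp)⟩
  have disjoint_T {v : V} (hv : v ∉ c.support) : Disjoint {v} (T 2) :=
    Set.disjoint_singleton_left.mpr fun h ↦ hv (hTc 2 v h)
  refine isMinor_K23_of_connectors (C := ![{u}, {w}, T 2]) (hT.connected 0) (hT.connected 1)
    (hT.disjoint (by decide)) ?_ (pairwise_disjoint_triple ?_ (disjoint_T hu) (disjoint_T hw))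
  · simpa [Fin.forall_fin_succ] using ⟨connector hu hui huj, connector hw hwi hwj, connector_T⟩
  · exact Set.disjoint_singleton.mpr huw

theorem notMem_of_adj_of_neighborSet_subset {S : Set V} {v s : S} {t : V}
    (hv : (G.induce S).neighborSet v ⊆ {s}) (hvt : G.Adj v t) (hts : t ≠ s) : t ∉ S :=
  fun ht ↦ hts (congrArg Subtype.val (hv (a := ⟨t, ht⟩) hvt))

theorem exists_two_adj_notMem {S : Set V} {v s : S}
    (hdeg : ∀ v y z, ∃ t, G.Adj v t ∧ t ≠ y ∧ t ≠ z)
    (hv : (G.induce S).neighborSet v ⊆ {s}) :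
    ∃ i ∉ S, ∃ j ∉ S, i ≠ j ∧ G.Adj v i ∧ G.Adj v j := by
  obtain ⟨i, hvi, his, -⟩ := hdeg v s s
  obtain ⟨j, hvj, hjs, hji⟩ := hdeg v s i
  exact ⟨i, notMem_of_adj_of_neighborSet_subset hv hvi his, j,
    notMem_of_adj_of_neighborSet_subset hv hvj hjs, hji.symm, hvi, hvj⟩

theorem isMinor_K4_or_K23_of_isAcyclic_outside [Finite V] {x : V} {c : G.Walk x x}
    (hdeg : ∀ v y z, ∃ t, G.Adj v t ∧ t ≠ y ∧ t ≠ z) (hc : c.IsCycle)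
    [Nonempty {v | v ∉ c.support}] (hacyc : (G.induce {v | v ∉ c.support}).IsAcyclic) :
    IsMinor K4 G ∨ IsMinor K23 G := by
  obtain ⟨u, w, p, hp, hu, hw⟩ := exists_isPath_leaf_ends hacyc
  obtain ⟨i, hi, j, hj, hij, hui, huj⟩ := exists_two_adj_notMem hdeg hu
  obtain ⟨k, hk, l, hl, hkl, hwk, hwl⟩ := exists_two_adj_notMem hdeg hw
  let q := p.map (Embedding.induce {v | v ∉ c.support}).toHom
  have hq (v) : v ∈ q.support ↔ ∃ v' ∈ p.support, v'.1 = v := by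
    rw [Walk.support_map, List.mem_map]; rfl
  simp only [Set.mem_ofPred_eq, not_not] at hi hj hk hl
  by_cases hthird : ∃ v ∈ p.support, ∃ t ∈ c.support, G.Adj v t ∧ t ≠ i ∧ t ≠ j
  · obtain ⟨v, hv, t, ht, hvt, hti, htj⟩ := hthird
    refine .inl (isMinor_K4_of_three_attachments hc (connected_support q) (fun v hv ↦ ?_) hi hj ht
      hij hti.symm htj.symm (linked_of_adj hui q.start_mem_support rfl)
      (linked_of_adj huj q.start_mem_support rfl) (linked_of_adj hvt ((hq v).mpr ⟨v, hv, rfl⟩) rfl))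
    obtain ⟨v', -, rfl⟩ := (hq v).mp hv
    exact v'.2
  · push Not at hthird
    by_cases huw : u = w
    · subst huw
      obtain rfl := (Walk.isPath_iff_nil.mp hp).eq_nil
      obtain ⟨t, hut, hti, htj⟩ := hdeg u i j
      have ht : t ∈ c.support := not_not.mp (notMem_of_adj_of_neighborSet_subset hu hut hut.ne')
      exact absurd (hthird u (Walk.start_mem_support _) t ht hut hti) htj
    · have hwij : G.Adj w i ∧ G.Adj w j := by
        have mem_pair {t : V} (ht : t ∈ c.support) (hwt : G.Adj w t) : t = i ∨ t = j :=
          or_iff_not_imp_left.mpr (hthird w p.end_mem_support t ht hwt)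
        rcases mem_pair hk hwk with rfl | rfl <;> rcases mem_pair hl hwl with rfl | rfl
        exacts [absurd rfl hkl, ⟨hwk, hwl⟩, ⟨hwl, hwk⟩, absurd rfl hkl]
      exact .inr (isMinor_K23_of_two_attachments hc hi hj hij u.2 w.2
        (Subtype.val_injective.ne huw) hui huj hwij.1 hwij.2)

theorem exists_neighborSet_subset_pair [Finite V] [Nonempty V] (h4 : ¬ IsMinor K4 G)
    (h23 : ¬ IsMinor K23 G) (hC : ¬ IsMinor C32 G) :
    ∃ x y z, G.neighborSet x ⊆ {y, z} := by
  by_contra! hdeg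
  replace hdeg (x y z : V) : ∃ t, G.Adj x t ∧ t ≠ y ∧ t ≠ z := by
    simpa [Set.not_subset] using hdeg x y z
  have hcyc : ¬ G.IsAcyclic := fun hG ↦ by
    obtain ⟨u, _, p, _, hu, _⟩ := exists_isPath_leaf_ends hG
    obtain ⟨t, hut, ht, -⟩ := hdeg u p.snd p.snd
    exact ht (hu hut)
  obtain ⟨y, a, b, r, hr, hchord⟩ := exists_chordless_isEar hcyc
  obtain ⟨c, hc, hcr⟩ := hr.exists_isCycle
  have houtside : Nonempty {v | v ∉ c.support} := by
    obtain ⟨t, hyt, hta, htb⟩ := hdeg y a b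
    refine ⟨t, fun ht ↦ ?_⟩
    exact (hchord t (List.mem_of_ne_of_mem hyt.ne' ((hcr t).mp ht)) hyt).elim hta htb
  have hacyc : (G.induce {v | v ∉ c.support}).IsAcyclic := by
    by_contra h
    obtain ⟨x, d, hd, hdc⟩ := not_isAcyclic_induce_iff.mp h
    exact hC (isMinor_C32_of_isCycle hc hd fun v hv hvd ↦ hdc v hvd hv)
  exact (isMinor_K4_or_K23_of_isAcyclic_outside hdeg hc hacyc).elim h4 h23

end MinDegree

section TriangleEars

variable {V : Type*} {G : SimpleGraph V}

theorem IsEar.reverse {y a b : V} {r : G.Walk a b} (hr : IsEar y r) : IsEar y r.reverse where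
  isPath := hr.isPath.reverse
  ne := hr.ne.symm
  notMem := by simpa using hr.notMem
  adj_start := hr.adj_end
  adj_end := hr.adj_start

theorem IsEar.isConnector_diff_start {y a b : V} {r : G.Walk a b} (hr : IsEar y r) :
    IsConnector G {y} {a} ({v | v ∈ r.support} \ {a}) := by
  obtain _ | ⟨h, r⟩ := r
  · exact absurd rfl hr.ne
  obtain ⟨hy, ha⟩ : y ∉ r.support ∧ a ∉ r.support :=
    ⟨fun hy ↦ hr.notMem (.tail _ hy), ((Walk.cons_isPath_iff h r).mp hr.isPath).2⟩
  have hdiff : {v | v ∈ (Walk.cons h r).support} \ {a} = {v | v ∈ r.support} := by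
    ext v
    simp only [Walk.support_cons, Set.mem_sdiff, Set.mem_ofPred_eq, List.mem_cons,
      Set.mem_singleton_iff]
    grind
  rw [hdiff]
  exact ⟨connected_support r, Set.disjoint_singleton_right.mpr hy,
    Set.disjoint_singleton_right.mpr ha, linked_of_adj hr.adj_end.symm r.end_mem_support rfl,
    linked_of_adj h.symm r.start_mem_support rfl⟩

theorem IsEar.isConnector_diff_end {y a b : V} {r : G.Walk a b} (hr : IsEar y r) :
    IsConnector G {y} {b} ({v | v ∈ r.support} \ {b}) := by
  simpa using hr.reverse.isConnector_diff_start

theorem IsEar.ends_eq {x y z a b : V} {r : G.Walk a b} (hr : IsEar x r)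
    (hx : G.neighborSet x ⊆ {y, z}) : a = y ∧ b = z ∨ a = z ∧ b = y := by
  rcases hx hr.adj_start with rfl | rfl <;> rcases hx hr.adj_end with rfl | rfl
  exacts [absurd rfl hr.ne, .inl ⟨rfl, rfl⟩, .inr ⟨rfl, rfl⟩, absurd rfl hr.ne]

/-- A connected part `S` of the ear `r` that is linked to the base `y` of the ear and meets `P`
in the single vertex `u`. -/
structure IsFirstHit (y : V) {a b : V} (r : G.Walk a b) (P S : Set V) (u : V) : Prop where
  subset : S ⊆ {v | v ∈ r.support}
  connected : (G.induce S).Connected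
  linked : Linked G S {y}
  inter_eq : S ∩ P = {u}

theorem IsFirstHit.mem {y a b u : V} {r : G.Walk a b} {P S : Set V} (h : IsFirstHit y r P S u) :
    u ∈ S ∩ P :=
  h.inter_eq.superset rfl

theorem IsFirstHit.disjoint_of_notMem {y a b u : V} {r : G.Walk a b} {P S Q : Set V}
    (h : IsFirstHit y r P S u) (hQ : Q ⊆ P) (hu : u ∉ Q) : Disjoint S Q :=
  Set.disjoint_left.mpr fun _ hvS hvQ ↦ hu (h.inter_eq.subset ⟨hvS, hQ hvQ⟩ ▸ hvQ)

theorem IsEar.exists_isFirstHit {y a b u v : V} {r : G.Walk a b} {P : Set V} (hr : IsEar y r)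
    (hur : u ∈ r.support) (huP : u ∈ P) (hvr : v ∈ r.support) (hvP : v ∈ P) (huv : u ≠ v) :
    ∃ S T u' v', Disjoint S T ∧ IsFirstHit y r P S u' ∧ IsFirstHit y r P T v' := by
  obtain ⟨S, T, h, hmem⟩ := exists_isPathSplitting hr.isPath hur hvr huv
  have hSP : (S ∩ P).Nonempty := hmem.elim (fun h ↦ ⟨u, h.1, huP⟩) fun h ↦ ⟨v, h.1, hvP⟩
  have hTP : (T ∩ P).Nonempty := hmem.elim (fun h ↦ ⟨v, h.2, hvP⟩) fun h ↦ ⟨u, h.2, huP⟩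
  obtain ⟨S', hS', S_conn, haS', u', hu'⟩ :=
    exists_connected_subset_inter_eq_singleton h.connected_left h.start_mem hSP
  obtain ⟨T', hT', T_conn, hbT', v', hv'⟩ :=
    exists_connected_subset_inter_eq_singleton h.connected_right h.end_mem hTP
  exact ⟨S', T', u', v', h.disjoint.mono hS' hT',
    ⟨fun w hw ↦ h.union_eq.subset (.inl (hS' hw)), S_conn,
      linked_of_adj hr.adj_start.symm haS' rfl, hu'⟩,
    ⟨fun w hw ↦ h.union_eq.subset (.inr (hT' hw)), T_conn,
      linked_of_adj hr.adj_end.symm hbT' rfl, hv'⟩⟩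

/-- A triangle `x y z` with an ear `r` at `y` and an ear `p` at `z` that avoid the triangle. -/
structure IsTriangleEars (x y z : V) {a b c d : V} (r : G.Walk a b) (p : G.Walk c d) : Prop where
  adj_xy : G.Adj x y
  adj_xz : G.Adj x z
  adj_yz : G.Adj y z
  left : IsEar y r
  right : IsEar z p
  x_notMem_left : x ∉ r.support
  x_notMem_right : x ∉ p.support
  z_notMem_left : z ∉ r.support
  y_notMem_right : y ∉ p.support

variable {x y z a b c d u : V} {r : G.Walk a b} {p : G.Walk c d}

theorem IsTriangleEars.symm (h : IsTriangleEars x y z r p) : IsTriangleEars x z y p r :=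
  ⟨h.adj_xz, h.adj_xy, h.adj_yz.symm, h.right, h.left, h.x_notMem_right, h.x_notMem_left,
    h.y_notMem_right, h.z_notMem_left⟩

theorem IsTriangleEars.isMinor_C32 (h : IsTriangleEars x y z r p)
    (hdisj : r.support.Disjoint p.support) : IsMinor C32 G := by
  refine isMinor_C32_of_isEar h.left h.right ?_
  rw [List.disjoint_cons_left, List.disjoint_cons_right]
  exact ⟨List.not_mem_cons_of_ne_of_not_mem h.adj_yz.ne h.y_notMem_right, h.z_notMem_left, hdisj⟩

theorem IsTriangleEars.isMinor_K23_of_two_common {v : V} (h : IsTriangleEars x y z r p)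
    (hur : u ∈ r.support) (hup : u ∈ p.support) (hvr : v ∈ r.support) (hvp : v ∈ p.support)
    (huv : u ≠ v) : IsMinor K23 G := by
  obtain ⟨S₁, S₂, u, v, hS, hu, hv⟩ :=
    h.left.exists_isFirstHit (P := {v | v ∈ p.support}) hur hup hvr hvp huv
  obtain ⟨Q, hQ, hQp, hQ0, huQ, hvQ⟩ :=
    h.right.exists_triangle hu.mem.2 hv.mem.2 (hS.ne_of_mem hu.mem.1 hv.mem.1)
  have hQ_sub {i : Fin 3} (hi : i ≠ 0) : Q i ⊆ {v | v ∈ p.support} := fun w hw ↦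
    List.mem_of_ne_of_mem ((hQ.disjoint hi).ne_of_mem hw (hQ0.superset rfl)) (hQp i w hw)
  have connector {i : Fin 3} (hi : i ≠ 0) {S : Set V} {w : V}
      (hw : IsFirstHit y r {v | v ∈ p.support} S w) (hwQ : w ∈ Q i) :
      IsConnector G {y} {z} (S ∪ Q i) := by
    refine ⟨induce_union_connected hw.connected.preconnected (hQ.connected i).preconnected
      ⟨w, hw.mem.1, hwQ⟩, ?_, ?_, hw.linked.mono Set.subset_union_left subset_rfl,
      (hQ.linked (show (⊤ : SimpleGraph _).Adj i 0 from hi)).mono Set.subset_union_right hQ0.subset⟩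
    · rw [Set.disjoint_singleton_right]
      exact not_or.mpr ⟨fun hy ↦ h.left.notMem (hw.subset hy),
        fun hy ↦ h.y_notMem_right (hQ_sub hi hy)⟩
    · rw [Set.disjoint_singleton_right]
      exact not_or.mpr ⟨fun hz ↦ h.z_notMem_left (hw.subset hz),
        fun hz ↦ h.right.notMem (hQ_sub hi hz)⟩
  have disjoint_x {i : Fin 3} (hi : i ≠ 0) {S : Set V} {w : V}
      (hw : IsFirstHit y r {v | v ∈ p.support} S w) : Disjoint {x} (S ∪ Q i) := by
    rw [Set.disjoint_singleton_left]
    exact not_or.mpr ⟨fun hx ↦ h.x_notMem_left (hw.subset hx),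
      fun hx ↦ h.x_notMem_right (hQ_sub hi hx)⟩
  refine isMinor_K23_of_connectors (C := ![{x}, S₁ ∪ Q 1, S₂ ∪ Q 2]) (connected_induce_singleton y)
    (connected_induce_singleton z) (Set.disjoint_singleton.mpr h.adj_yz.ne) ?_
    (pairwise_disjoint_triple (disjoint_x (by decide) hu) (disjoint_x (by decide) hv) ?_)
  · have connector_x : IsConnector G {y} {z} {x} :=
      isConnector_singleton h.adj_xy.ne h.adj_xz.ne rfl rfl h.adj_xy h.adj_xz
    simpa [Fin.forall_fin_succ] using
      ⟨connector_x, connector (by decide) hu huQ, connector (by decide) hv hvQ⟩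
  · have hQ₁₂ : Disjoint (Q 1) (Q 2) := hQ.disjoint (by decide)
    simp only [Set.disjoint_union_left, Set.disjoint_union_right]
    exact ⟨⟨hS, (hv.disjoint_of_notMem (hQ_sub (by decide)) (hQ₁₂.notMem_of_mem_right hvQ)).symm⟩,
      hu.disjoint_of_notMem (hQ_sub (by decide)) (hQ₁₂.notMem_of_mem_left huQ), hQ₁₂⟩

theorem IsTriangleEars.isMinor_K23_of_interior (h : IsTriangleEars x y z r p)
    (hur : u ∈ r.support) (hup : u ∈ p.support) (hua : u ≠ a) (hub : u ≠ b)
    (huniq : ∀ v ∈ r.support, v ∈ p.support → v = u) : IsMinor K23 G := by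
  obtain ⟨S, hS, T, hT, hST, S_conn, T_conn, haS, hbT, hSu, hTu⟩ :=
    exists_splitting_at_interior h.left.isPath hur hua hub
  have connector {D : Set V} {e : V} (hD : D ⊆ {v | v ∈ r.support} \ {u})
      (D_conn : (G.induce D).Connected) (heD : e ∈ D) (hye : G.Adj y e) (hDu : Linked G D {u}) :
      IsConnector G {y} {v | v ∈ p.support} D :=
    ⟨D_conn, Set.disjoint_singleton_right.mpr fun hy ↦ h.left.notMem (hD hy).1,
      Set.disjoint_left.mpr fun v hv hvp ↦ (hD hv).2 (huniq v (hD hv).1 hvp),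
      linked_of_adj hye.symm heD rfl, hDu.mono subset_rfl (Set.singleton_subset_iff.mpr hup)⟩
  have disjoint_z {D : Set V} (hD : D ⊆ {v | v ∈ r.support} \ {u}) : Disjoint {z} D :=
    Set.disjoint_singleton_left.mpr fun hz ↦ h.z_notMem_left (hD hz).1
  refine isMinor_K23_of_connectors (C := ![{z}, S, T]) (connected_induce_singleton y)
    (connected_support p) (Set.disjoint_singleton_left.mpr h.y_notMem_right) ?_
    (pairwise_disjoint_triple (disjoint_z hS) (disjoint_z hT) hST)
  have connector_z : IsConnector G {y} {v | v ∈ p.support} {z} :=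
    isConnector_singleton h.adj_yz.ne' h.right.notMem rfl p.start_mem_support h.adj_yz.symm
      h.right.adj_start
  simpa [Fin.forall_fin_succ] using ⟨connector_z, connector hS S_conn haS h.left.adj_start hSu,
    connector hT T_conn hbT h.left.adj_end hTu⟩

theorem IsTriangleEars.isMinor_graphA (h : IsTriangleEars x y z r p) (hur : u = a ∨ u = b)
    (hup : u = c ∨ u = d) (huniq : ∀ v ∈ r.support, v ∈ p.support → v = u) :
    IsMinor graphA G := by
  have connector_r : IsConnector G {y} {u} ({v | v ∈ r.support} \ {u}) := by
    rcases hur with rfl | rfl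
    exacts [h.left.isConnector_diff_start, h.left.isConnector_diff_end]
  have connector_p : IsConnector G {z} {u} ({v | v ∈ p.support} \ {u}) := by
    rcases hup with rfl | rfl
    exacts [h.right.isConnector_diff_start, h.right.isConnector_diff_end]
  have hyu : G.Adj y u := by
    rcases hur with rfl | rfl
    exacts [h.left.adj_start, h.left.adj_end]
  have hzu : G.Adj z u := by
    rcases hup with rfl | rfl
    exacts [h.right.adj_start, h.right.adj_end]
  have hxu : x ≠ u := by
    rintro rfl
    rcases hur with rfl | rfl
    exacts [h.x_notMem_left r.start_mem_support, h.x_notMem_left r.end_mem_support]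
  have triangle : IsMinorModel ⊤ G ![{y}, {z}, {u}] :=
    isMinorModel_triangle (connected_induce_singleton y) (connected_induce_singleton z)
      (connected_induce_singleton u) (Set.disjoint_singleton.mpr h.adj_yz.ne)
      (Set.disjoint_singleton.mpr hyu.ne) (Set.disjoint_singleton.mpr hzu.ne)
      (linked_of_adj h.adj_yz rfl rfl) (linked_of_adj hyu rfl rfl) (linked_of_adj hzu rfl rfl)
  refine isMinor_graphA_of_triangle triangle
    (E := ![{x}, {v | v ∈ p.support} \ {u}, {v | v ∈ r.support} \ {u}]) ?_ ?_
    (pairwise_disjoint_triple ?_ ?_ ?_)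
  · have connector_x : IsConnector G {y} {z} {x} :=
      isConnector_singleton h.adj_xy.ne h.adj_xz.ne rfl rfl h.adj_xy h.adj_xz
    simpa [Fin.forall_fin_succ] using ⟨connector_x, connector_p, connector_r.symm⟩
  · simp [Fin.forall_fin_succ, hxu, h.y_notMem_right, h.z_notMem_left]
  · exact Set.disjoint_singleton_left.mpr fun hx ↦ h.x_notMem_right hx.1
  · exact Set.disjoint_singleton_left.mpr fun hx ↦ h.x_notMem_left hx.1
  · exact Set.disjoint_left.mpr fun v hvp hvr ↦ hvr.2 (huniq v hvr.1 hvp.1)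

theorem IsTriangleEars.isMinor (h : IsTriangleEars x y z r p) :
    IsMinor K23 G ∨ IsMinor C32 G ∨ IsMinor graphA G := by
  by_cases hdisj : r.support.Disjoint p.support
  · exact .inr (.inl (h.isMinor_C32 hdisj))
  obtain ⟨u, hur, hup⟩ : ∃ u ∈ r.support, u ∈ p.support := by
    simpa [List.Disjoint] using hdisj
  by_cases huniq : ∀ v ∈ r.support, v ∈ p.support → v = u
  · by_cases hr_end : u = a ∨ u = b
    · by_cases hp_end : u = c ∨ u = d
      · exact .inr (.inr (h.isMinor_graphA hr_end hp_end huniq))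
      · obtain ⟨huc, hud⟩ := not_or.mp hp_end
        exact .inl (h.symm.isMinor_K23_of_interior hup hur huc hud fun v hvp hvr ↦ huniq v hvr hvp)
    · obtain ⟨hua, hub⟩ := not_or.mp hr_end
      exact .inl (h.isMinor_K23_of_interior hur hup hua hub huniq)
  · push Not at huniq
    obtain ⟨v, hvr, hvp, hvu⟩ := huniq
    exact .inl (h.isMinor_K23_of_two_common hvr hvp hur hup hvu)

theorem exists_isEar_of_isCycle_avoiding {w : V} {e : G.Walk w w} (hC : ¬ IsMinor C32 G)
    (hx : G.neighborSet x ⊆ {y, z}) (hxy : G.Adj x y) (hxz : G.Adj x z) (hyz : G.Adj y z)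
    (he : e.IsCycle) (hy : y ∉ e.support) :
    ∃ (c d : V) (p : G.Walk c d), IsEar z p ∧ x ∉ p.support ∧ y ∉ p.support := by
  have hxe : x ∉ e.support := fun hxe ↦ by
    obtain ⟨a, b, r, hr, her⟩ := exists_isEar_of_isCycle he hxe
    rcases hr.ends_eq hx with ⟨rfl, rfl⟩ | ⟨rfl, rfl⟩
    exacts [hy ((her _).mpr (.tail _ r.start_mem_support)),
      hy ((her _).mpr (.tail _ r.end_mem_support))]
  have hze : z ∈ e.support := by
    by_contra hze
    have ear_x : IsEar x (Walk.cons hyz .nil) :=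
      ⟨by simpa using hyz.ne, hyz.ne, by simp [hxy.ne, hxz.ne], hxy, hxz⟩
    obtain ⟨t, ht, hsupp⟩ := ear_x.exists_isCycle
    refine hC (isMinor_C32_of_isCycle ht he fun v hvt hve ↦ ?_)
    have hv : v = x ∨ v = y ∨ v = z := by simpa using (hsupp v).mp hvt
    rcases hv with rfl | rfl | rfl <;> contradiction
  obtain ⟨c, d, p, hp, hep⟩ := exists_isEar_of_isCycle he hze
  exact ⟨c, d, p, hp, fun h ↦ hxe ((hep x).mpr (.tail _ h)), fun h ↦ hy ((hep y).mpr (.tail _ h))⟩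

theorem isAcyclic_induce_compl_of_triangle (h23 : ¬ IsMinor K23 G) (hC : ¬ IsMinor C32 G)
    (hA : ¬ IsMinor graphA G) (hx : G.neighborSet x ⊆ {y, z}) (hxy : G.Adj x y) (hxz : G.Adj x z)
    (hyz : G.Adj y z) : (G.induce {y}ᶜ).IsAcyclic ∨ (G.induce {z}ᶜ).IsAcyclic := by
  by_contra! hcyc
  obtain ⟨_, e, he, hey⟩ := not_isAcyclic_induce_iff.mp hcyc.1
  obtain ⟨_, f, hf, hfz⟩ := not_isAcyclic_induce_iff.mp hcyc.2
  obtain ⟨c, d, p, hp, hxp, hyp⟩ := exists_isEar_of_isCycle_avoiding hC hx hxy hxz hyz he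
    fun hy ↦ hey y hy rfl
  obtain ⟨a, b, r, hr, hxr, hzr⟩ := exists_isEar_of_isCycle_avoiding hC
    (hx.trans (Set.pair_comm y z).subset) hxz hxy hyz.symm hf fun hz ↦ hfz z hz rfl
  have ears : IsTriangleEars x y z r p := ⟨hxy, hxz, hyz, hr, hp, hxr, hxp, hzr, hyp⟩
  exact ears.isMinor.elim h23 (·.elim hC hA)

end TriangleEars

section Apex

variable {V : Type*} {G : SimpleGraph V}

/-- The graph has none of the minors `K_4`, `K_{2,3}`, `C_{3,2}` and `A`. -/
structure HasNoObstruction (G : SimpleGraph V) : Prop where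
  K4 : ¬ IsMinor K4 G
  K23 : ¬ IsMinor K23 G
  C32 : ¬ IsMinor C32 G
  graphA : ¬ IsMinor graphA G

theorem HasNoObstruction.of_isMinor {W : Type*} {H : SimpleGraph W} (hG : HasNoObstruction G)
    (hHG : IsMinor H G) : HasNoObstruction H :=
  ⟨fun h ↦ hG.K4 (h.trans hHG), fun h ↦ hG.K23 (h.trans hHG), fun h ↦ hG.C32 (h.trans hHG),
    fun h ↦ hG.graphA (h.trans hHG)⟩

variable {x y z : V}

theorem isMinor_induce_compl_sup_edge (hyz : y = z ∨ G.Adj x y ∧ G.Adj x z) :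
    IsMinor ((G ⊔ edge y z).induce {x}ᶜ) G := by
  obtain rfl | ⟨hxy, hxz⟩ := hyz
  · rw [sup_edge_self]
    exact isMinor_of_isContained ⟨(Embedding.induce _).toCopy⟩
  refine ⟨fun v ↦ {w | w = v ∨ w = x ∧ v = y}, isMinorModel_of_connected ?_ ?_ ?_⟩
  · rintro ⟨v, -⟩
    by_cases hvy : v = y
    · have hset : {w | w = v ∨ w = x ∧ v = y} = {x, y} := by
        ext w
        simp [hvy, or_comm]
      change (G.induce {w | w = v ∨ w = x ∧ v = y}).Connected
      exact hset ▸ connected_induce_insert (connected_induce_singleton y) rfl hxy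
    · have hset : {w | w = v ∨ w = x ∧ v = y} = {v} := by
        ext w
        simp [hvy]
      change (G.induce {w | w = v ∨ w = x ∧ v = y}).Connected
      exact hset ▸ connected_induce_singleton v
  · rintro ⟨v, hv⟩ ⟨w, hw⟩ hne
    rw [Ne, Subtype.mk.injEq] at hne
    refine Set.disjoint_left.mpr ?_
    rintro t (htv | ⟨htx, hvy⟩) (htw | ⟨htx', hwy⟩)
    exacts [hne (htv.symm.trans htw), hv (htv.symm.trans htx'), hw (htw.symm.trans htx),
      hne (hvy.trans hwy.symm)]
  · rintro ⟨v, hv⟩ ⟨w, hw⟩ (hvw | hvw)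
    · exact linked_of_adj hvw (.inl rfl) (.inl rfl)
    · obtain ⟨⟨rfl, rfl⟩ | ⟨rfl, rfl⟩, -⟩ := (edge_adj ..).mp hvw
      exacts [linked_of_adj hxz (.inr ⟨rfl, rfl⟩) (.inl rfl),
        linked_of_adj hxz.symm (.inl rfl) (.inr ⟨rfl, rfl⟩)]

theorem exists_isCycle_sup_edge_avoiding {u : V} {c : G.Walk u u} (hx : G.neighborSet x ⊆ {y, z})
    (hyz : ¬ G.Adj y z) (hc : c.IsCycle) :
    ∃ v, ∃ d : (G ⊔ edge y z).Walk v v, d.IsCycle ∧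
      ∀ w ∈ d.support, w ∈ c.support ∧ w ∈ ({x}ᶜ : Set V) := by
  by_cases hxc : x ∈ c.support
  · obtain ⟨a, b, r, hr, hcr⟩ := exists_isEar_of_isCycle hc hxc
    have hba_new : ¬ G.Adj b a ∧ (G ⊔ edge y z).Adj b a := by
      rcases hr.ends_eq hx with ⟨rfl, rfl⟩ | ⟨rfl, rfl⟩
      exacts [⟨fun h ↦ hyz h.symm, .inr ((edge_adj ..).mpr ⟨.inr ⟨rfl, rfl⟩, hr.ne.symm⟩)⟩,
        ⟨hyz, .inr ((edge_adj ..).mpr ⟨.inl ⟨rfl, rfl⟩, hr.ne.symm⟩)⟩]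
    refine ⟨b, .cons hba_new.2 (r.mapLe le_sup_left), ?_, fun w hw ↦ ?_⟩
    · rw [Walk.cons_isCycle_iff, Walk.isPath_mapLe]
      refine ⟨hr.isPath, fun h ↦ hba_new.1 (r.adj_of_mem_edges ?_)⟩
      simpa using h
    · have hwr : w ∈ r.support := by
        rw [Walk.support_cons, List.mem_cons] at hw
        exact hw.elim (· ▸ r.end_mem_support) fun hw ↦ by simpa using hw
      exact ⟨(hcr w).mpr (.tail _ hwr), ne_of_mem_of_not_mem hwr hr.notMem⟩
  · exact ⟨u, c.mapLe le_sup_left, hc.mapLe _, fun w hw ↦ by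
      have hwc : w ∈ c.support := by simpa using hw
      exact ⟨hwc, ne_of_mem_of_not_mem hwc hxc⟩⟩

theorem isAcyclic_induce_compl_of_sup_edge {v : ({x}ᶜ : Set V)} (hx : G.neighborSet x ⊆ {y, z})
    (hyz : ¬ G.Adj y z) (hv : (((G ⊔ edge y z).induce {x}ᶜ).induce {v}ᶜ).IsAcyclic) :
    (G.induce {v.1}ᶜ).IsAcyclic := by
  by_contra h
  obtain ⟨u, c, hc, hcv⟩ := not_isAcyclic_induce_iff.mp h
  obtain ⟨u', d, hd, hdc⟩ := exists_isCycle_sup_edge_avoiding hx hyz hc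
  refine not_isAcyclic_induce_iff.mpr ⟨_, d.induce {x}ᶜ fun w hw ↦ (hdc w hw).2,
    (isCycle_induce_iff _).mpr hd, ?_⟩ hv
  rintro ⟨w, hwx⟩ hw rfl
  rw [Walk.support_induce, List.mem_attachWith] at hw
  exact hcv w (hdc w hw).1 rfl

theorem HasNoObstruction.exists_isAcyclic_induce_compl [Finite V] [Nonempty V]
    (hG : HasNoObstruction G) : ∃ v, (G.induce {v}ᶜ).IsAcyclic := by
  induction hn : Nat.card V using Nat.strong_induction_on generalizing V with
  | h n ih =>
    obtain ⟨x, y, z, hx⟩ := exists_neighborSet_subset_pair hG.K4 hG.K23 hG.C32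
    have suppress {y z : V} (hx : G.neighborSet x ⊆ {y, z}) (hyz : ¬ G.Adj y z)
        (hyz' : y = z ∨ G.Adj x y ∧ G.Adj x z) : ∃ v, (G.induce {v}ᶜ).IsAcyclic := by
      rcases isEmpty_or_nonempty ({x}ᶜ : Set V) with hempty | hnonempty
      · exact ⟨x, .of_subsingleton⟩
      · obtain ⟨v, hv⟩ := ih (Nat.card ({x}ᶜ : Set V))
          (hn ▸ Finite.card_subtype_lt (x := x) (by simp))
          (hG.of_isMinor (isMinor_induce_compl_sup_edge hyz')) rfl
        exact ⟨v, isAcyclic_induce_compl_of_sup_edge hx hyz hv⟩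
    have delete {t : V} (hx : G.neighborSet x ⊆ {t}) : ∃ v, (G.induce {v}ᶜ).IsAcyclic :=
      suppress (by simpa using hx) (SimpleGraph.irrefl G) (.inl rfl)
    by_cases hxy : G.Adj x y
    · by_cases hxz : G.Adj x z
      · by_cases hyz : G.Adj y z
        · exact (isAcyclic_induce_compl_of_triangle hG.K23 hG.C32 hG.graphA hx hxy hxz hyz).elim
            (⟨y, ·⟩) (⟨z, ·⟩)
        · exact suppress hx hyz (.inr ⟨hxy, hxz⟩)
      · exact delete (t := y) fun w hw ↦ (hx hw).resolve_right fun h ↦ hxz (h ▸ hw)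
    · exact delete (t := z) fun w hw ↦ (hx hw).resolve_left fun h ↦ hxy (h ▸ hw)

end Apex

section LinearForests

variable {V : Type*} {G : SimpleGraph V}

theorem disjoint_support_of_isAcyclic {t a b c d : V} (hG : G.IsAcyclic) {hta : G.Adj t a}
    {htb : G.Adj t b} (hab : a ≠ b) {p : G.Walk a c} {q : G.Walk b d}
    (hp : (Walk.cons hta p).IsPath) (hq : (Walk.cons htb q).IsPath) :
    p.support.Disjoint q.support := by
  classical
  intro s hsp hsq
  have cons_takeUntil {a c : V} {hta : G.Adj t a} {p : G.Walk a c} (hp : (Walk.cons hta p).IsPath)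
      (hs : s ∈ p.support) : (Walk.cons hta (p.takeUntil s hs)).IsPath :=
    (hp.of_cons.takeUntil hs).cons fun ht ↦
      ((Walk.cons_isPath_iff _ _).mp hp).2 (p.support_takeUntil_subset_support hs ht)
  have hunique := congrArg Subtype.val ((hG.subsingleton_path t s).elim
    ⟨_, cons_takeUntil hp hsp⟩ ⟨_, cons_takeUntil hq hsq⟩)
  rw [Walk.cons.injEq] at hunique
  exact hab hunique.1

theorem exists_isPath_adj_apex [Finite V] {v : V} (hdeg : ∀ x y, ¬ G.neighborSet x ⊆ {y})
    (hv : (G.induce {v}ᶜ).IsAcyclic) {t a : ({v}ᶜ : Set V)} (hta : (G.induce {v}ᶜ).Adj t a) :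
    ∃ (b : ({v}ᶜ : Set V)) (p : (G.induce {v}ᶜ).Walk a b), (Walk.cons hta p).IsPath ∧
      G.Adj b v := by
  obtain ⟨b, p, hp, hb⟩ := exists_append_isPath_leaf_end hv
    (p := .cons hta .nil) (by simpa using hta.ne)
  rw [Walk.cons_append, Walk.nil_append] at hp hb
  obtain ⟨x, hbx, hx⟩ := Set.not_subset.mp (hdeg b (Walk.cons hta p).penultimate)
  obtain rfl | hxv := eq_or_ne x v
  · exact ⟨b, p, hp, hbx⟩
  · exact absurd (congrArg Subtype.val (hb (a := ⟨x, hxv⟩) hbx)) hx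

theorem isConnector_image_support {v : V} {t a b : ({v}ᶜ : Set V)}
    {hta : (G.induce {v}ᶜ).Adj t a} {p : (G.induce {v}ᶜ).Walk a b} (hp : (Walk.cons hta p).IsPath)
    (hbv : G.Adj b v) : IsConnector G {t.1} {v} (Subtype.val '' {w | w ∈ p.support}) where
  connected := connected_induce_image (Embedding.induce {v}ᶜ).toHom (connected_support p)
  disjoint_left := by
    rw [← Set.image_singleton, Set.disjoint_image_iff Subtype.val_injective,
      Set.disjoint_singleton_right]
    exact ((Walk.cons_isPath_iff _ _).mp hp).2
  disjoint_right := by simp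
  linked_left := linked_of_adj (G.adj_symm hta) ⟨a, p.start_mem_support, rfl⟩ rfl
  linked_right := linked_of_adj hbv ⟨b, p.end_mem_support, rfl⟩ rfl

theorem ncard_neighborSet_le_two_of_isAcyclic [Finite V] {v : V} (h23 : ¬ IsMinor K23 G)
    (hdeg : ∀ x y, ¬ G.neighborSet x ⊆ {y}) (hv : (G.induce {v}ᶜ).IsAcyclic)
    (t : ({v}ᶜ : Set V)) : ((G.induce {v}ᶜ).neighborSet t).ncard ≤ 2 := by
  by_contra! hcard
  obtain ⟨a, b, c, hta, htb, htc, hab, hac, hbc⟩ := (Set.two_lt_ncard_iff (Set.toFinite _)).mp hcard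
  obtain ⟨a', p, hp, ha'v⟩ := exists_isPath_adj_apex hdeg hv hta
  obtain ⟨b', q, hq, hb'v⟩ := exists_isPath_adj_apex hdeg hv htb
  obtain ⟨c', r, hr, hc'v⟩ := exists_isPath_adj_apex hdeg hv htc
  let D {x y : ({v}ᶜ : Set V)} (p : (G.induce {v}ᶜ).Walk x y) : Set V :=
    Subtype.val '' {w | w ∈ p.support}
  have disjoint_D {x x' y y' : ({v}ᶜ : Set V)} {p : (G.induce {v}ᶜ).Walk x y}
      {p' : (G.induce {v}ᶜ).Walk x' y'} (h : p.support.Disjoint p'.support) :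
      Disjoint (D p) (D p') :=
    (Set.disjoint_image_iff Subtype.val_injective).mpr
      (Set.disjoint_left.mpr fun _ hw hw' ↦ h hw hw')
  refine h23 (isMinor_K23_of_connectors (C := ![D p, D q, D r]) (connected_induce_singleton t.1)
    (connected_induce_singleton v) (Set.disjoint_singleton.mpr t.2) ?_
    (pairwise_disjoint_triple (disjoint_D (disjoint_support_of_isAcyclic hv hab hp hq))
      (disjoint_D (disjoint_support_of_isAcyclic hv hac hp hr))
      (disjoint_D (disjoint_support_of_isAcyclic hv hbc hq hr))))
  simpa [Fin.forall_fin_succ] using ⟨isConnector_image_support hp ha'v,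
    isConnector_image_support hq hb'v, isConnector_image_support hr hc'v⟩

theorem exists_getVert_of_adj_of_leaf_ends [Finite V] {u v x : V} {p : G.Walk u v} {i : ℕ}
    (hp : p.IsPath) (hu : G.neighborSet u ⊆ {p.snd}) (hv : G.neighborSet v ⊆ {p.penultimate})
    (hdeg : ∀ t, (G.neighborSet t).ncard ≤ 2) (hi : i ≤ p.length) (hx : G.Adj (p.getVert i) x) :
    ∃ j ≤ p.length, p.getVert j = x ∧ (i + 1 = j ∨ j + 1 = i) := by
  have hlen : p.length ≠ 0 := fun h ↦ by
    obtain rfl := Walk.eq_of_length_eq_zero h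
    obtain rfl : i = 0 := by omega
    rw [Walk.getVert_zero] at hx
    have hx' : x = p.getVert 1 := hu hx
    rw [Walk.getVert_of_length_le p (by omega)] at hx'
    exact hx.ne' hx'
  obtain rfl | hi0 := eq_or_ne i 0
  · rw [Walk.getVert_zero] at hx
    exact ⟨1, by omega, (hu hx).symm, .inl rfl⟩
  obtain rfl | hilen := eq_or_ne i p.length
  · rw [Walk.getVert_length] at hx
    exact ⟨p.length - 1, by omega, (hv hx).symm, .inr (by omega)⟩
  by_contra! hne
  have hpred : G.Adj (p.getVert i) (p.getVert (i - 1)) := by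
    simpa [Nat.sub_add_cancel (Nat.pos_of_ne_zero hi0)] using
      (p.adj_getVert_succ (i := i - 1) (by omega)).symm
  have hsucc : G.Adj (p.getVert i) (p.getVert (i + 1)) := p.adj_getVert_succ (by omega)
  refine (hdeg (p.getVert i)).not_gt ((Set.two_lt_ncard_iff (Set.toFinite _)).mpr
    ⟨_, _, x, hpred, hsucc, hx, fun h ↦ ?_, fun h ↦ ?_, fun h ↦ ?_⟩)
  · have : i - 1 = i + 1 := hp.getVert_injOn (show i - 1 ≤ p.length by omega)
      (show i + 1 ≤ p.length by omega) h
    omega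
  · exact (hne (i - 1) (by omega) h).2 (by omega)
  · exact (hne (i + 1) (by omega) h).1 rfl

theorem isContained_pathGraph_add {S : Set V} {m n : ℕ} (hS : ∀ u ∈ S, ∀ v ∉ S, ¬ G.Adj u v)
    (hm : G.induce S ⊑ pathGraph m) (hn : G.induce Sᶜ ⊑ pathGraph n) :
    G ⊑ pathGraph (m + n) := by
  classical
  obtain ⟨f⟩ := hm
  obtain ⟨g⟩ := hn
  let φ (v : V) : Fin (m + n) :=
    if hv : v ∈ S then (f ⟨v, hv⟩).castAdd n else (g ⟨v, hv⟩).natAdd m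
  have hφ_adj {u v : V} (huv : G.Adj u v) : (pathGraph (m + n)).Adj (φ u) (φ v) := by
    by_cases hu : u ∈ S <;> by_cases hv : v ∈ S
    · have := f.toHom.map_adj (v := ⟨u, hu⟩) (w := ⟨v, hv⟩) huv
      simpa [φ, hu, hv, pathGraph_adj] using this
    · exact absurd huv (hS u hu v hv)
    · exact absurd huv.symm (hS v hv u hu)
    · have := g.toHom.map_adj (v := ⟨u, hu⟩) (w := ⟨v, hv⟩) huv
      simpa [φ, hu, hv, pathGraph_adj, add_assoc] using this
  refine ⟨⟨φ, hφ_adj⟩, fun u v huv ↦ ?_⟩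
  change φ u = φ v at huv
  by_cases hu : u ∈ S <;> by_cases hv : v ∈ S <;>
    simp only [φ, hu, hv, dite_true, dite_false, Fin.ext_iff, Fin.val_castAdd,
      Fin.val_natAdd] at huv
  · exact congrArg Subtype.val (f.injective (Fin.ext huv))
  · omega
  · omega
  · exact congrArg Subtype.val (g.injective (Fin.ext (Nat.add_left_cancel huv)))

theorem isContained_pathGraph_of_isAcyclic [Finite V] (hG : G.IsAcyclic)
    (hdeg : ∀ v, (G.neighborSet v).ncard ≤ 2) : ∃ n, G ⊑ pathGraph n := by
  induction hn : Nat.card V using Nat.strong_induction_on generalizing V with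
  | h n ih =>
    rcases isEmpty_or_nonempty V with hV | hV
    · exact ⟨0, .of_isEmpty⟩
    obtain ⟨u, v, p, hp, hu, hv⟩ := exists_isPath_leaf_ends hG
    let S : Set V := {w | w ∈ p.support}
    have exists_getVert (w : S) : ∃ i : Fin (p.length + 1), p.getVert i = w := by
      obtain ⟨i, hi, hilen⟩ := Walk.mem_support_iff_exists_getVert.mp w.2
      exact ⟨⟨i, by omega⟩, hi⟩
    choose index hindex using exists_getVert
    have adj_index {w : S} {x : V} (hwx : G.Adj w x) :
        ∃ j ≤ p.length, p.getVert j = x ∧ (index w + 1 = j ∨ j + 1 = index w) :=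
      exists_getVert_of_adj_of_leaf_ends hp hu hv hdeg (by omega) ((hindex w).symm ▸ hwx)
    have hS : G.induce S ⊑ pathGraph (p.length + 1) := by
      refine ⟨⟨index, fun {w x} hwx ↦ ?_⟩, fun w x hwx ↦ ?_⟩
      · obtain ⟨j, hj, hjx, hij⟩ := adj_index hwx
        obtain rfl : j = index x := hp.getVert_injOn hj (show _ ≤ p.length by omega)
          (hjx.trans (hindex x).symm)
        exact pathGraph_adj.mpr hij
      · exact Subtype.ext ((hindex w).symm.trans ((congrArg _ (congrArg _ hwx)).trans (hindex x)))
    have hdeg' (w : (Sᶜ : Set V)) : ((G.induce Sᶜ).neighborSet w).ncard ≤ 2 :=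
      (Set.ncard_le_ncard_of_injOn Subtype.val (fun _ hx ↦ hx) Subtype.val_injective.injOn
        (Set.toFinite _)).trans (hdeg w)
    obtain ⟨m, hm⟩ := ih (Nat.card (Sᶜ : Set V))
      (hn ▸ Finite.card_subtype_lt (x := u) fun h ↦ h p.start_mem_support) (hG.induce _)
      hdeg' rfl
    refine ⟨_, isContained_pathGraph_add (fun w hw x hx hwx ↦ hx ?_) hS hm⟩
    obtain ⟨j, -, rfl, -⟩ := adj_index (w := ⟨w, hw⟩) hwx
    exact p.getVert_mem_support j

end LinearForests

section AddVertex

variable {U V W : Type*} {G : SimpleGraph V} {H : SimpleGraph W}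

/-- The graph obtained from `G` by adding a new vertex `none` with neighborhood `N`: a pendant
vertex when `N` is a singleton, an apex vertex when `N` is everything. -/
def addVertex (G : SimpleGraph V) (N : Set V) : SimpleGraph (Option V) where
  Adj
    | none, none => False
    | none, some v => v ∈ N
    | some u, none => u ∈ N
    | some u, some v => G.Adj u v
  symm := ⟨by rintro (_ | u) (_ | v) h; exacts [h, h, h, G.adj_symm h]⟩
  loopless := ⟨by rintro (_ | u) h; exacts [h, G.irrefl h]⟩

theorem IsMinorModel.isMinor_addVertex {f : W → Set V} (hf : IsMinorModel H G f) {D : Set V}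
    {N : Set W} (hD : (G.induce D).Connected) (hdisj : ∀ w, Disjoint D (f w))
    (hlink : ∀ w ∈ N, Linked G D (f w)) : IsMinor (addVertex H N) G := by
  refine ⟨fun a ↦ a.elim D f, isMinorModel_of_connected ?_ ?_ ?_⟩
  · rintro (_ | w)
    exacts [hD, hf.connected w]
  · rintro (_ | w₁) (_ | w₂) hne
    exacts [absurd rfl hne, hdisj w₂, (hdisj w₁).symm, hf.disjoint (by simpa using hne)]
  · rintro (_ | w₁) (_ | w₂) h
    exacts [h.elim, hlink w₂ h, (hlink w₁ h).symm, hf.linked h]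

theorem IsMinorModel.isMinor_addVertex_addVertex {f : W → Set V} (hf : IsMinorModel H G f)
    {M : Set W} {N : Set V} (hN : ∀ w ∈ M, (f w ∩ N).Nonempty) :
    IsMinor (addVertex H M) (addVertex G N) := by
  have some_model : IsMinorModel H (addVertex G N) fun w ↦ some '' f w := by
    refine isMinorModel_of_connected (fun w ↦ ?_) (fun w₁ w₂ hne ↦ ?_) fun w₁ w₂ hw ↦ ?_
    · exact connected_induce_image (F := G) ⟨some, fun h ↦ h⟩ (hf.connected w)
    · exact (Set.disjoint_image_iff (Option.some_injective V)).mpr (hf.disjoint hne)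
    · obtain ⟨v₁, hv₁, v₂, hv₂, hv⟩ := hf.linked hw
      exact ⟨some v₁, ⟨v₁, hv₁, rfl⟩, some v₂, ⟨v₂, hv₂, rfl⟩, hv⟩
  refine some_model.isMinor_addVertex (connected_induce_singleton none) (by simp) fun w hw ↦ ?_
  obtain ⟨v, hv, hvN⟩ := hN w hw
  exact ⟨none, rfl, some v, ⟨v, hv, rfl⟩, hvN⟩

theorem isContained_addVertex_induce_compl (x : W) :
    H ⊑ addVertex (H.induce {x}ᶜ) {w | H.Adj x w} := by
  classical
  let φ (w : W) : Option ({x}ᶜ : Set W) := if hw : w = x then none else some ⟨w, hw⟩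
  have φ_self : φ x = none := dif_pos rfl
  have φ_of_ne {w : W} (hw : w ≠ x) : φ w = some ⟨w, hw⟩ := dif_neg hw
  refine ⟨⟨φ, fun {u w} huw ↦ ?_⟩, fun u w huw ↦ ?_⟩
  · obtain rfl | hu := eq_or_ne u x
    · exact φ_self ▸ φ_of_ne huw.ne' ▸ huw
    obtain rfl | hw := eq_or_ne w x
    · exact φ_self ▸ φ_of_ne hu ▸ huw.symm
    · exact φ_of_ne hu ▸ φ_of_ne hw ▸ huw
  · change φ u = φ w at huw
    by_cases hu : u = x <;> by_cases hw : w = x <;> simp only [φ, hu, hw, dite_true, dite_false,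
      reduceCtorEq, Option.some.injEq] at huw
    exacts [hu.trans hw.symm, congrArg Subtype.val huw]

theorem isMinor_addVertex_univ {x : W} (h : IsMinor (H.induce {x}ᶜ) G) :
    IsMinor H (addVertex G Set.univ) := by
  obtain ⟨f, hf⟩ := h
  exact (isMinor_of_isContained (isContained_addVertex_induce_compl x)).trans
    (hf.isMinor_addVertex_addVertex fun w _ ↦ by simpa using hf.1 w)

theorem exists_isMinor_addVertex_singleton [Nonempty V] {x y : W} (hx : H.neighborSet x ⊆ {y})
    (h : IsMinor (H.induce {x}ᶜ) G) : ∃ u, IsMinor H (addVertex G {u}) := by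
  obtain ⟨f, hf⟩ := h
  obtain ⟨u, hu⟩ : ∃ u, ∀ w : ({x}ᶜ : Set W), w.1 = y → u ∈ f w := by
    by_cases hyx : y = x
    · exact ⟨Classical.arbitrary V, fun w hw ↦ absurd (hw.trans hyx) w.2⟩
    · obtain ⟨u, hu⟩ := hf.1 ⟨y, hyx⟩
      exact ⟨u, by rintro ⟨_, _⟩ rfl; exact hu⟩
  exact ⟨u, (isMinor_of_isContained (isContained_addVertex_induce_compl x)).trans
    (hf.isMinor_addVertex_addVertex fun w hxw ↦ ⟨u, hu w (hx hxw), rfl⟩)⟩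

end AddVertex

section BinaryTree

variable {k : ℕ}

theorem Pgraph_adj_cons (b : Bool) (σ : List Bool) (hσ : σ.length < k) :
    (Pgraph k).Adj (some ⟨σ, hσ.le⟩) (some ⟨b :: σ, hσ⟩) := by
  rw [Pgraph, fromEdgeSet_adj]
  exact ⟨.inl ⟨b, σ, hσ, rfl⟩, by simp⟩

theorem Pgraph_adj_none_some (l : CTVert k) (hl : l.1.length = k) :
    (Pgraph k).Adj none (some l) := by
  rw [Pgraph, fromEdgeSet_adj]
  exact ⟨.inr ⟨l, hl, rfl⟩, by simp⟩

theorem Pgraph_adj_induction {R : Option (CTVert k) → Option (CTVert k) → Prop}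
    (symm : ∀ u v, R u v → R v u)
    (cons : ∀ (b : Bool) (σ : List Bool) (hσ : σ.length < k),
      R (some ⟨σ, hσ.le⟩) (some ⟨b :: σ, hσ⟩))
    (leaf : ∀ l : CTVert k, l.1.length = k → R none (some l)) {u v : Option (CTVert k)}
    (huv : (Pgraph k).Adj u v) : R u v := by
  rw [Pgraph, fromEdgeSet_adj] at huv
  rw [← Sym2.fromRel_prop (sym := ⟨symm⟩)]
  obtain ⟨⟨b, σ, hσ, h⟩ | ⟨l, hl, h⟩, -⟩ := huv
  · exact h ▸ cons b σ hσ
  · exact h ▸ leaf l hl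

/-- The path `0ⁱ, 10ⁱ, 110ⁱ, …` of `CT_k`, from the `i`-th vertex of the leftmost branch
down to a leaf along right moves. -/
def rightBranch (k i : ℕ) : Set (Option (CTVert k)) :=
  {x | ∃ (j : ℕ) (h : (List.replicate j true ++ List.replicate i false).length ≤ k),
    x = some ⟨_, h⟩}

theorem connected_induce_rightBranch {i : ℕ} (hi : i ≤ k) :
    ((Pgraph k).induce (rightBranch k i)).Connected := by
  rw [connected_iff_exists_forall_reachable]
  refine ⟨⟨some ⟨List.replicate i false, by simpa using hi⟩, 0, by simpa using hi, rfl⟩, ?_⟩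
  rintro ⟨_, j, h, rfl⟩
  induction j with
  | zero => rfl
  | succ j ih =>
    have hj : (List.replicate j true ++ List.replicate i false).length < k := h
    have step : ((Pgraph k).induce (rightBranch k i)).Adj ⟨_, j, hj.le, rfl⟩ ⟨_, j + 1, h, rfl⟩ :=
      Pgraph_adj_cons true _ hj
    exact (ih hj.le).trans step.reachable

theorem disjoint_rightBranch {i i' : ℕ} (hne : i ≠ i') :
    Disjoint (rightBranch k i) (rightBranch k i') := by
  rw [Set.disjoint_left]
  rintro _ ⟨j, h, rfl⟩ ⟨j', h', heq⟩
  have hcount := congrArg (List.count false) (congrArg Subtype.val (Option.some.inj heq))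
  exact hne (by simpa [List.count_replicate] using hcount)

theorem isMinor_addVertex_pathGraph_Pgraph {n : ℕ} (hn : n ≤ k + 1) :
    IsMinor (addVertex (pathGraph n) Set.univ) (Pgraph k) := by
  have branch_model : IsMinorModel (pathGraph n) (Pgraph k) fun i ↦ rightBranch k i := by
    refine isMinorModel_of_connected (fun i ↦ connected_induce_rightBranch (by omega))
      (fun i i' hne ↦ disjoint_rightBranch (Fin.val_injective.ne hne)) ?_
    have linked_succ {i : ℕ} (hi : i + 1 ≤ k) :
        Linked (Pgraph k) (rightBranch k i) (rightBranch k (i + 1)) :=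
      linked_of_adj (Pgraph_adj_cons false (List.replicate i false) (by simpa using hi))
        ⟨0, by simp; omega, rfl⟩ ⟨0, by simpa using hi, rfl⟩
    intro i i' hii'
    obtain h | h := pathGraph_adj.mp hii'
    · exact h ▸ linked_succ (by omega)
    · exact (h ▸ linked_succ (by omega)).symm
  refine branch_model.isMinor_addVertex (connected_induce_singleton none) (fun i ↦ ?_) fun i _ ↦ ?_
  · simp [rightBranch]
  · exact linked_of_adj (Pgraph_adj_none_some ⟨_, by simp; omega⟩ (by simp; omega)) rfl
      ⟨k - i, by simp; omega, rfl⟩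

/-- The vertex of `CT_{2k}` reached by putting an extra left move before every move of `σ`; as in
`CTVert`, the latest move comes first in the list. -/
def stretch : List Bool → List Bool
  | [] => []
  | b :: σ => b :: false :: stretch σ

theorem length_stretch (σ : List Bool) : (stretch σ).length = 2 * σ.length := by
  induction σ with
  | nil => rfl
  | cons b σ ih => simp only [stretch, List.length_cons, ih]; omega

theorem stretch_injective : stretch.Injective := by
  intro σ
  induction σ with
  | nil => rintro (_ | _) h; exacts [rfl, nomatch h]
  | cons b σ ih =>
    rintro (_ | ⟨c, τ⟩) h
    · exact nomatch h
    · simp only [stretch, List.cons.injEq, true_and] at h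
      rw [h.1, ih h.2]

theorem cons_stretch_ne_stretch (b : Bool) (σ τ : List Bool) : b :: stretch σ ≠ stretch τ := by
  intro h
  have := congrArg List.length h
  simp only [length_stretch, List.length_cons] at this
  omega

/-- The vertex of `CT_{2k+1}` corresponding to `σ` when every edge of `CT_k` is subdivided. -/
def stretchVert (σ : CTVert k) : CTVert (2 * k + 1) :=
  ⟨stretch σ.1, by have := σ.2; rw [length_stretch]; omega⟩

/-- The child of `stretchVert σ` in direction `b`. -/
def stretchChild (b : Bool) (σ : CTVert k) : CTVert (2 * k + 1) :=
  ⟨b :: stretch σ.1, by have := σ.2; rw [List.length_cons, length_stretch]; omega⟩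

theorem Pgraph_adj_stretchVert_stretchChild (b : Bool) (σ : CTVert k) :
    (Pgraph (2 * k + 1)).Adj (some (stretchVert σ)) (some (stretchChild b σ)) :=
  Pgraph_adj_cons b _ (stretchChild b σ).2

theorem Pgraph_adj_none_stretchChild (b : Bool) (σ : CTVert k) (hσ : σ.1.length = k) :
    (Pgraph (2 * k + 1)).Adj none (some (stretchChild b σ)) :=
  Pgraph_adj_none_some _ (by simp [stretchChild, length_stretch, hσ])

/-- The branch sets of a model of `𝒫_k` in `𝒫_{2k+1}` that leaves every right child
`stretchChild true σ` unused. -/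
def stretchBranch : Option (CTVert k) → Set (Option (CTVert (2 * k + 1)))
  | none => {none}
  | some σ => {some (stretchVert σ), some (stretchChild false σ)}

theorem isMinorModel_stretchBranch :
    IsMinorModel (Pgraph k) (Pgraph (2 * k + 1)) stretchBranch := by
  refine isMinorModel_of_connected ?_ ?_ ?_
  · rintro (_ | σ)
    · exact connected_induce_singleton none
    · exact connected_induce_insert (connected_induce_singleton _) rfl
        (Pgraph_adj_stretchVert_stretchChild false σ)
  · rintro (_ | σ) (_ | τ) hne
    · exact absurd rfl hne
    · simp [stretchBranch]
    · simp [stretchBranch]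
    · have hστ : stretch σ.1 ≠ stretch τ.1 :=
        stretch_injective.ne (Subtype.val_injective.ne (by simpa using hne))
      simp [stretchBranch, stretchVert, stretchChild, cons_stretch_ne_stretch, hστ.symm,
        (cons_stretch_ne_stretch _ _ _).symm]
  · intro u v huv
    refine Pgraph_adj_induction (R := fun u v ↦ Linked _ (stretchBranch u) (stretchBranch v))
      (fun _ _ ↦ Linked.symm) (fun b σ hσ ↦ ?_) (fun l hl ↦ ?_) huv
    · exact linked_of_adj (Pgraph_adj_cons b (false :: stretch σ) (by
        rw [List.length_cons, length_stretch]; omega)) (.inr rfl) (.inl rfl)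
    · exact linked_of_adj (Pgraph_adj_none_stretchChild false l hl) rfl (.inr rfl)

theorem stretchChild_true_notMem_stretchBranch (σ : CTVert k) (u : Option (CTVert k)) :
    some (stretchChild true σ) ∉ stretchBranch u := by
  obtain _ | τ := u <;>
    simp [stretchBranch, stretchChild, stretchVert, cons_stretch_ne_stretch]

theorem isMinor_addVertex_singleton_Pgraph (u : Option (CTVert k)) :
    IsMinor (addVertex (Pgraph k) {u}) (Pgraph (2 * k + 1)) := by
  obtain ⟨σ, hσ⟩ : ∃ σ : CTVert k,
      Linked (Pgraph (2 * k + 1)) {some (stretchChild true σ)} (stretchBranch u) := by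
    obtain _ | σ := u
    · exact ⟨⟨List.replicate k false, by simp⟩,
        linked_of_adj (Pgraph_adj_none_stretchChild true _ (by simp)).symm rfl rfl⟩
    · exact ⟨σ, linked_of_adj (Pgraph_adj_stretchVert_stretchChild true σ).symm rfl (.inl rfl)⟩
  refine isMinorModel_stretchBranch.isMinor_addVertex (connected_induce_singleton _)
    (fun w ↦ Set.disjoint_singleton_left.mpr (stretchChild_true_notMem_stretchBranch σ w)) ?_
  rintro _ rfl
  exact hσ

end BinaryTree

section TriangleTree

variable {k : ℕ}

theorem inr_ne_qbase {σ τ : List Bool} (hτ : τ.length < k) (hστ : σ.length ≤ τ.length) :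
    Sum.inr ⟨τ, hτ⟩ ≠ (qbase k σ).1 ∧ Sum.inr ⟨τ, hτ⟩ ≠ (qbase k σ).2 := by
  induction σ with
  | nil => simp [qbase]
  | cons b σ ih =>
    have hσ : σ.length < τ.length := hστ
    have hne : τ ≠ σ := fun h ↦ hσ.ne (congrArg _ h.symm)
    obtain ⟨ih₁, ih₂⟩ := ih hσ.le
    cases b <;> simp [qbase, ih₁, ih₂, hσ.trans hτ, hne]

theorem Qgraph_adj_base : (Qgraph k).Adj (Sum.inl false) (Sum.inl true) := by
  rw [Qgraph, fromEdgeSet_adj]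
  exact ⟨.inl rfl, by simp⟩

theorem Qgraph_adj_inr_fst (σ : List Bool) (hσ : σ.length < k) :
    (Qgraph k).Adj (Sum.inr ⟨σ, hσ⟩) (qbase k σ).1 := by
  rw [Qgraph, fromEdgeSet_adj]
  exact ⟨.inr ⟨σ, hσ, .inl rfl⟩, (inr_ne_qbase hσ le_rfl).1⟩

theorem Qgraph_adj_inr_snd (σ : List Bool) (hσ : σ.length < k) :
    (Qgraph k).Adj (Sum.inr ⟨σ, hσ⟩) (qbase k σ).2 := by
  rw [Qgraph, fromEdgeSet_adj]
  exact ⟨.inr ⟨σ, hσ, .inr rfl⟩, (inr_ne_qbase hσ le_rfl).2⟩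

theorem Qgraph_adj_induction {R : QVert k → QVert k → Prop}
    (symm : ∀ u v, R u v → R v u) (base : R (Sum.inl false) (Sum.inl true))
    (fst : ∀ (σ : List Bool) (hσ : σ.length < k), R (Sum.inr ⟨σ, hσ⟩) (qbase k σ).1)
    (snd : ∀ (σ : List Bool) (hσ : σ.length < k), R (Sum.inr ⟨σ, hσ⟩) (qbase k σ).2)
    {u v : QVert k} (huv : (Qgraph k).Adj u v) : R u v := by
  rw [Qgraph, fromEdgeSet_adj] at huv
  rw [← Sym2.fromRel_prop (sym := ⟨symm⟩)]
  obtain ⟨h | ⟨σ, hσ, h | h⟩, -⟩ := huv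
  · exact h ▸ base
  · exact h ▸ fst σ hσ
  · exact h ▸ snd σ hσ

theorem qbase_cons_snd (b : Bool) {σ : List Bool} (hσ : σ.length < k) :
    (qbase k (b :: σ)).2 = Sum.inr ⟨σ, hσ⟩ :=
  dif_pos hσ

theorem qbase_replicate_append_fst (j : ℕ) (τ : List Bool) :
    (qbase k (List.replicate j false ++ τ)).1 = (qbase k τ).1 := by
  induction j with
  | zero => rfl
  | succ _ ih => exact ih

theorem isMinor_addVertex_pathGraph_Qgraph {n : ℕ} (hn : n ≤ k) :
    IsMinor (addVertex (pathGraph n) Set.univ) (Qgraph k) := by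
  let φ (i : Fin n) : QVert k := Sum.inr ⟨List.replicate i false, by simp; omega⟩
  have φ_injective : φ.Injective := fun i j hij ↦ by simpa [φ, Fin.ext_iff] using hij
  have adj_succ {i j : Fin n} (hij : (i : ℕ) + 1 = j) : (Qgraph k).Adj (φ j) (φ i) := by
    have hi : (List.replicate i false).length < k := by simp; omega
    have hj : (false :: List.replicate i false).length < k := by simp; omega
    have hadj := Qgraph_adj_inr_snd _ hj
    rw [qbase_cons_snd false hi] at hadj
    simpa only [φ, ← hij, List.replicate_succ] using hadj
  have path_model : IsMinorModel (pathGraph n) (Qgraph k) fun i ↦ {φ i} := by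
    refine isMinorModel_of_connected (fun i ↦ connected_induce_singleton _)
      (fun i j hne ↦ Set.disjoint_singleton.mpr (φ_injective.ne hne)) fun i j hij ↦ ?_
    obtain h | h := pathGraph_adj.mp hij
    · exact linked_of_adj (adj_succ h).symm rfl rfl
    · exact linked_of_adj (adj_succ h) rfl rfl
  have adj_apex (i : Fin n) : (Qgraph k).Adj (Sum.inl false) (φ i) := by
    have hfst : (qbase k (List.replicate i false)).1 = Sum.inl false := by
      simpa [qbase] using qbase_replicate_append_fst i []
    exact hfst ▸ (Qgraph_adj_inr_fst (List.replicate i false) _).symm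
  exact path_model.isMinor_addVertex (connected_induce_singleton (Sum.inl false)) (by simp [φ])
    fun i _ ↦ linked_of_adj (adj_apex i) rfl rfl

/-- The inclusion of `𝒬_k` in `𝒬_m`, for `k ≤ m`, that fixes the base edge. -/
def qinclusion {m : ℕ} (hkm : k ≤ m) : QVert k → QVert m :=
  Sum.map id fun σ ↦ ⟨σ.1, σ.2.trans_le hkm⟩

variable {m : ℕ} (hkm : k ≤ m)

theorem qinclusion_injective : (qinclusion hkm).Injective :=
  Sum.map_injective.mpr ⟨Function.injective_id, fun _ _ h ↦
    Subtype.ext (Subtype.mk.inj h)⟩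

theorem qinclusion_qbase {σ : List Bool} (hσ : σ.length ≤ k) :
    qinclusion hkm (qbase k σ).1 = (qbase m σ).1 ∧
      qinclusion hkm (qbase k σ).2 = (qbase m σ).2 := by
  induction σ with
  | nil => exact ⟨rfl, rfl⟩
  | cons b σ ih =>
    have hσ' : σ.length < k := hσ
    obtain ⟨ih₁, ih₂⟩ := ih hσ'.le
    rw [qbase_cons_snd b hσ', qbase_cons_snd b (hσ'.trans_le hkm)]
    cases b
    exacts [⟨ih₁, rfl⟩, ⟨ih₂, rfl⟩]

theorem isMinorModel_qinclusion :
    IsMinorModel (Qgraph k) (Qgraph m) fun u ↦ {qinclusion hkm u} := by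
  refine isMinorModel_of_connected (fun u ↦ connected_induce_singleton _)
    (fun u v hne ↦ Set.disjoint_singleton.mpr ((qinclusion_injective hkm).ne hne))
    fun u v huv ↦ ?_
  refine Qgraph_adj_induction (R := fun u v ↦ Linked _ {qinclusion hkm u} {qinclusion hkm v})
    (fun _ _ ↦ Linked.symm) ?_ (fun σ hσ ↦ ?_) (fun σ hσ ↦ ?_) huv
  · exact linked_of_adj Qgraph_adj_base rfl rfl
  · exact linked_of_adj (Qgraph_adj_inr_fst σ (hσ.trans_le hkm)) rfl
      (qinclusion_qbase hkm hσ.le).1.symm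
  · exact linked_of_adj (Qgraph_adj_inr_snd σ (hσ.trans_le hkm)) rfl
      (qinclusion_qbase hkm hσ.le).2.symm

theorem inr_ne_qinclusion {τ : List Bool} (hτ : τ.length < m) (hkτ : k ≤ τ.length) (u : QVert k) :
    Sum.inr ⟨τ, hτ⟩ ≠ qinclusion hkm u := by
  rintro h
  obtain b | ⟨σ, hσ⟩ := u
  · exact nomatch h
  · have hlen := congrArg List.length (congrArg Subtype.val (Sum.inr.inj h))
    exact hσ.not_ge (hkτ.trans_eq hlen)

theorem exists_qbase_fst_eq_qinclusion (u : QVert k) :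
    ∃ τ : List Bool, k ≤ τ.length ∧ τ.length ≤ k + 1 ∧ (qbase m τ).1 = qinclusion hkm u := by
  obtain ⟨τ, hτ, hu⟩ : ∃ τ : List Bool, τ.length ≤ k + 1 ∧ (qbase m τ).1 = qinclusion hkm u := by
    obtain (_ | _) | ⟨σ, hσ⟩ := u
    · exact ⟨[], by simp, rfl⟩
    · exact ⟨[true], by simp, rfl⟩
    · exact ⟨true :: false :: σ, by simp; omega, qbase_cons_snd false (hσ.trans_le hkm)⟩
  exact ⟨List.replicate (k - τ.length) false ++ τ, by simp; omega, by simp; omega,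
    (qbase_replicate_append_fst _ _).trans hu⟩

theorem isMinor_addVertex_singleton_Qgraph (hk : 0 < k) (u : QVert k) :
    IsMinor (addVertex (Qgraph k) {u}) (Qgraph (2 * k + 1)) := by
  have hkm : k ≤ 2 * k + 1 := by omega
  obtain ⟨τ, hkτ, hτk, hu⟩ := exists_qbase_fst_eq_qinclusion hkm u
  have hτ : τ.length < 2 * k + 1 := by omega
  refine (isMinorModel_qinclusion hkm).isMinor_addVertex
    (connected_induce_singleton (Sum.inr ⟨τ, hτ⟩))
    (fun v ↦ Set.disjoint_singleton.mpr (inr_ne_qinclusion hkm hτ hkτ v)) ?_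
  rintro _ rfl
  exact linked_of_adj (Qgraph_adj_inr_fst τ hτ) rfl hu

end TriangleTree

section Main

variable {V : Type*} {H : SimpleGraph V}

theorem exists_isMinor_of_isMinor_induce_compl {x y : V} (hx : H.neighborSet x ⊆ {y})
    (h : ∃ k, 0 < k ∧ IsMinor (H.induce {x}ᶜ) (Pgraph k) ∧ IsMinor (H.induce {x}ᶜ) (Qgraph k)) :
    ∃ k, 0 < k ∧ IsMinor H (Pgraph k) ∧ IsMinor H (Qgraph k) := by
  obtain ⟨k, hk, hP, hQ⟩ := h
  obtain ⟨u, hu⟩ := exists_isMinor_addVertex_singleton hx hP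
  obtain ⟨v, hv⟩ := exists_isMinor_addVertex_singleton hx hQ
  exact ⟨2 * k + 1, by omega, hu.trans (isMinor_addVertex_singleton_Pgraph u),
    hv.trans (isMinor_addVertex_singleton_Qgraph hk v)⟩

theorem exists_isMinor_of_isContained_pathGraph {x : V}
    (h : ∃ n, H.induce {x}ᶜ ⊑ pathGraph n) :
    ∃ k, 0 < k ∧ IsMinor H (Pgraph k) ∧ IsMinor H (Qgraph k) := by
  obtain ⟨n, hn⟩ := h
  have hfan := isMinor_addVertex_univ (isMinor_of_isContained hn)
  exact ⟨n + 1, n.succ_pos, hfan.trans (isMinor_addVertex_pathGraph_Pgraph (by omega)),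
    hfan.trans (isMinor_addVertex_pathGraph_Qgraph (by omega))⟩

theorem minor_of_Pk_and_Qk_of_no_K4_K23_C32_A_minor_general [Finite V]
    (hH : HasNoObstruction H) : ∃ k : ℕ, 0 < k ∧ IsMinor H (Pgraph k) ∧ IsMinor H (Qgraph k) := by
  induction hn : Nat.card V using Nat.strong_induction_on generalizing V with
  | h n ih =>
    rcases isEmpty_or_nonempty V with hV | hV
    · exact ⟨1, one_pos, isMinor_of_isContained .of_isEmpty, isMinor_of_isContained .of_isEmpty⟩
    by_cases hleaf : ∃ x y, H.neighborSet x ⊆ {y}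
    · obtain ⟨x, y, hx⟩ := hleaf
      have hdelete : HasNoObstruction (H.induce {x}ᶜ) :=
        hH.of_isMinor (isMinor_of_isContained ⟨(Embedding.induce _).toCopy⟩)
      exact exists_isMinor_of_isMinor_induce_compl hx
        (ih _ (hn ▸ Finite.card_subtype_lt (x := x) (by simp)) hdelete rfl)
    · push Not at hleaf
      obtain ⟨v, hv⟩ := hH.exists_isAcyclic_induce_compl
      exact exists_isMinor_of_isContained_pathGraph (isContained_pathGraph_of_isAcyclic hv
        (ncard_neighborSet_le_two_of_isAcyclic hH.K23 hleaf hv))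

end Main

/-- Corollary 2.5. If a graph `H` has no `K₄`, `K_{2,3}`, `C_{3,2}` or
`A` minor, then there is a `k` such that `H` is isomorphic to a minor of `𝒫_k` and to a
minor of `𝒬_k`. -/
theorem minor_of_Pk_and_Qk_of_no_K4_K23_C32_A_minor {V : Type} [Fintype V]
    (H : SimpleGraph V) (h4 : ¬ IsMinor K4 H) (h23 : ¬ IsMinor K23 H)
    (hC : ¬ IsMinor C32 H) (hA : ¬ IsMinor graphA H) :
    ∃ k : ℕ, 0 < k ∧ IsMinor H (Pgraph k) ∧ IsMinor H (Qgraph k) :=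
  minor_of_Pk_and_Qk_of_no_K4_K23_C32_A_minor_general ⟨h4, h23, hC, hA⟩
end

section
/- Let p and w be positive integers and let G be a graph of tree-width strictly less than w and path-width at least p. Then for every tree-decomposition (T,X) of G of width strictly less than w, the path-width of the tree T is at least ⌊p/w⌋. -/
/-!
Common definitions: minors, widths, connectivity, the specific graphs
`K4`, `K23`, `C32`, `graphA`, the binary trees `CT_h`, the graphs `𝒫_k`, `𝒬_k`,
the trees `T_h`, homeomorphic embeddings, cascades, and related notions,
following Dang--Thomas, "Minors of two-connected graphs of large path-width".
-/

open SimpleGraph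

/-!
If `T` has a path-decomposition with bags `Y i`, then replacing every index `t ∈ Y i` by its bag
`X t` gives a path-decomposition of `G` whose bags have at most `(pathwidth T + 1) * w` vertices.
Each vertex of `G` occupies an interval of this decomposition because the indices of the bags
containing it form a connected subgraph of `T`, and a walk in `T` cannot jump over a bag `Y j`.
-/

namespace IsPathDecomp

variable {V : Type*} {G : SimpleGraph V} {n : ℕ} {Y : Fin n → Finset V}

theorem exists_mem_support_mem_bag (hY : IsPathDecomp G Y) {a b : V} (q : G.Walk a b)
    {i j k : Fin n} (hij : i ≤ j) (hjk : j ≤ k) (ha : a ∈ Y i) (hb : b ∈ Y k) :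
    ∃ v ∈ q.support, v ∈ Y j := by
  induction q generalizing i with
  | nil => exact ⟨_, Walk.start_mem_support _, hY.2.2 i j k hij hjk _ ha hb⟩
  | @cons a c _ hac q ih =>
    obtain ⟨m, ham, hcm⟩ := hY.2.1 a c hac
    rcases le_total m j with hmj | hjm
    · obtain ⟨v, hvq, hvj⟩ := ih hmj hcm hb
      exact ⟨v, List.mem_cons_of_mem _ hvq, hvj⟩
    · exact ⟨a, Walk.start_mem_support _, hY.2.2 i j m hij hjm a ha ham⟩

theorem pathwidth_le [Fintype V] (hY : IsPathDecomp G Y) {k : ℕ}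
    (hcard : ∀ i, (Y i).card ≤ k + 1) : pathwidth G ≤ k :=
  Nat.sInf_le ⟨n, Y, hY, hcard⟩

end IsPathDecomp

theorem isPathDecomp_univ {V : Type*} [Fintype V] (G : SimpleGraph V) :
    IsPathDecomp G fun _ : Fin 1 ↦ Finset.univ := by
  simp [IsPathDecomp]

theorem exists_isPathDecomp_card_le_pathwidth_add_one {V : Type*} [Fintype V]
    (G : SimpleGraph V) :
    ∃ (n : ℕ) (Y : Fin n → Finset V), IsPathDecomp G Y ∧ ∀ i, (Y i).card ≤ pathwidth G + 1 :=
  Nat.sInf_mem (s := {k | ∃ (n : ℕ) (Y : Fin n → Finset V),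
    IsPathDecomp G Y ∧ ∀ i, (Y i).card ≤ k + 1})
    ⟨Fintype.card V, 1, _, isPathDecomp_univ G, fun _ ↦ Nat.le_succ _⟩

/-- `X` is an `H`-decomposition of `G`: the analogue of a tree-decomposition in which the indexing
tree is replaced by an arbitrary graph `H`. Condition (W2) becomes the connectedness of the set of
indices whose bags contain a given vertex; `Connected` includes nonemptiness, so that this field
also says that the bags cover `V`. -/
structure IsGraphDecomp {V T : Type*} (G : SimpleGraph V) (H : SimpleGraph T)
    (X : T → Finset V) : Prop where
  connected_induce (v : V) : (H.induce {t | v ∈ X t}).Connected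
  exists_mem_mem_of_adj {u v : V} : G.Adj u v → ∃ t, u ∈ X t ∧ v ∈ X t

theorem IsTreeDecomp.isGraphDecomp {V T : Type*} {G : SimpleGraph V} {Tr : SimpleGraph T}
    {X : T → Finset V} (hX : IsTreeDecomp G Tr X) : IsGraphDecomp G Tr X where
  connected_induce v := by
    obtain ⟨hTree, hcover, -, hpath⟩ := hX
    refine (connected_iff _).2 ⟨?_, nonempty_subtype.2 (hcover v)⟩
    rintro ⟨a, ha⟩ ⟨b, hb⟩
    obtain ⟨q, hq⟩ := hTree.connected.exists_isPath a b
    exact ⟨q.induce {t | v ∈ X t} fun t ht ↦ hpath a t b q hq ht v ha hb⟩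
  exists_mem_mem_of_adj := hX.2.2.1 _ _

namespace IsGraphDecomp

variable {V T : Type*} {G : SimpleGraph V} {H : SimpleGraph T} {X : T → Finset V}

theorem isPathDecomp_biUnion [DecidableEq V] (hX : IsGraphDecomp G H X) {n : ℕ}
    {Y : Fin n → Finset T} (hY : IsPathDecomp H Y) :
    IsPathDecomp G fun i ↦ (Y i).biUnion X := by
  refine ⟨fun v ↦ ?_, fun u v huv ↦ ?_, fun i j k hij hjk v hvi hvk ↦ ?_⟩
  · obtain ⟨t, hvt⟩ := (hX.connected_induce v).nonempty
    obtain ⟨i, hti⟩ := hY.1 t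
    exact ⟨i, Finset.mem_biUnion.2 ⟨t, hti, hvt⟩⟩
  · obtain ⟨t, hut, hvt⟩ := hX.exists_mem_mem_of_adj huv
    obtain ⟨i, hti⟩ := hY.1 t
    exact ⟨i, Finset.mem_biUnion.2 ⟨t, hti, hut⟩, Finset.mem_biUnion.2 ⟨t, hti, hvt⟩⟩
  · obtain ⟨a, hai, hva⟩ := Finset.mem_biUnion.1 hvi
    obtain ⟨b, hbk, hvb⟩ := Finset.mem_biUnion.1 hvk
    obtain ⟨q⟩ := (hX.connected_induce v).preconnected ⟨a, hva⟩ ⟨b, hvb⟩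
    obtain ⟨t, htq, htj⟩ :=
      hY.exists_mem_support_mem_bag (q.map (Embedding.induce _).toHom) hij hjk hai hbk
    have hvt : v ∈ X t := by
      rw [Walk.support_map] at htq
      obtain ⟨s, -, rfl⟩ := List.mem_map.1 htq
      exact s.2
    exact Finset.mem_biUnion.2 ⟨t, htj, hvt⟩

theorem pathwidth_lt_mul [Fintype V] [Fintype T] (hX : IsGraphDecomp G H X) {w : ℕ} (hw : 0 < w)
    (hwidth : ∀ t, (X t).card ≤ w) : pathwidth G < (pathwidth H + 1) * w := by
  classical
  obtain ⟨n, Y, hY, hYcard⟩ := exists_isPathDecomp_card_le_pathwidth_add_one H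
  have hcard (i : Fin n) : ((Y i).biUnion X).card ≤ (pathwidth H + 1) * w :=
    (Finset.card_biUnion_le_card_mul _ _ _ fun t _ ↦ hwidth t).trans
      (Nat.mul_le_mul_right w (hYcard i))
  have hpos : 0 < (pathwidth H + 1) * w := by positivity
  have hle : pathwidth G ≤ (pathwidth H + 1) * w - 1 :=
    (hX.isPathDecomp_biUnion hY).pathwidth_le fun i ↦
      (hcard i).trans_eq (Nat.sub_add_cancel hpos).symm
  exact Nat.lt_of_le_sub_one hpos hle

end IsGraphDecomp

theorem pathwidth_of_decomposition_tree_general {V T : Type*} [Fintype V] [Fintype T]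
    {G : SimpleGraph V} {H : SimpleGraph T} {X : T → Finset V} {p w : ℕ} (hw : 0 < w)
    (hpw : p ≤ pathwidth G) (hX : IsGraphDecomp G H X) (hwidth : ∀ t, (X t).card ≤ w) :
    p / w ≤ pathwidth H :=
  Nat.lt_succ_iff.1 <| (Nat.div_lt_iff_lt_mul hw).2 <|
    hpw.trans_lt (hX.pathwidth_lt_mul hw hwidth)

/-- Lemma 4.1. Let `p, w` be positive integers and `G` a graph of
tree-width less than `w` and path-width at least `p`. Then for every tree-decomposition
`(T, X)` of `G` of width less than `w`, the path-width of the tree `T` is at least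
`⌊p / w⌋`. -/
theorem pathwidth_of_decomposition_tree (p w : ℕ) (hp : 0 < p) (hw : 0 < w)
    {V : Type} [Fintype V] (G : SimpleGraph V)
    (htw : treewidth G < w) (hpw : p ≤ pathwidth G)
    {T : Type} [Fintype T] (Tr : SimpleGraph T) (X : T → Finset V)
    (hTD : IsTreeDecomp G Tr X) (hwidth : ∀ t, (X t).card ≤ w) :
    p / w ≤ pathwidth Tr :=
  pathwidth_of_decomposition_tree_general hw hpw hTD.isGraphDecomp hwidth
end

section
/- Let a ≥ 1 be an integer and let T be a forest of path-width at least a. Then there exists a homeomorphic embedding of CT_{a−1} into T. -/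
/-!
Common definitions: minors, widths, connectivity, the specific graphs
`K4`, `K23`, `C32`, `graphA`, the binary trees `CT_h`, the graphs `𝒫_k`, `𝒬_k`,
the trees `T_h`, homeomorphic embeddings, cascades, and related notions,
following Dang--Thomas, "Minors of two-connected graphs of large path-width".
-/

open SimpleGraph

/-!
Root every component of the forest and let the Horton–Strahler number of a vertex be the largest
height of a binary tree that is embedded below it, directed away from the root. It does not
increase along descendants, and if two children of `v` have number at least `k`, then `v` has number
at least `k + 1`.

Suppose that all these numbers are less than `m`. Traverse the forest depth-first, visiting the
children of each vertex in increasing order of their numbers, and let the bag of `t` consist of `t`,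
its parent and the ancestors of `t` that still have a child to be visited. The path down to `t`
leaves each of the latter ancestors through a child other than the heaviest, so the number drops
strictly there. Hence there are at most `m - 1` of them, and the path-width is at most `m`.

So a forest of path-width at least `a` contains a binary tree of height `a - 1` directed away from
the root. Its branch vertices define a homeomorphic embedding: a path contains the edge from `x` to
its child `y` if and only if exactly one of its ends is a descendant of `y`, and this cannot hold
for the paths from a branch vertex to two of its neighbours at once.
-/

theorem prefix_of_le_of_le {α : Type*} [LinearOrder α] {l a b c : List α} (hla : l <+: a)
    (hlc : l <+: c) (hab : a ≤ b) (hbc : b ≤ c) : l <+: b := by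
  induction l generalizing a b c with
  | nil => exact List.nil_prefix
  | cons x l ih =>
    obtain ⟨a, rfl⟩ := hla
    obtain ⟨c, rfl⟩ := hlc
    -- The `≤` of core on lists is not the one of the linear order; only `<` is shared.
    rw [← not_lt] at hab hbc
    obtain _ | ⟨y, b⟩ := b
    · exact absurd (List.nil_lt_cons _ _) hab
    · rw [List.cons_append, List.cons_lt_cons_iff, not_or, not_and] at hab hbc
      obtain rfl : x = y := le_antisymm (not_lt.mp hab.1) (not_lt.mp hbc.1)
      exact (List.prefix_cons_inj x).mpr (ih (List.prefix_append _ _) (List.prefix_append _ _)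
        (not_lt.mp (hab.2 rfl)) (not_lt.mp (hbc.2 rfl)))

theorem lt_of_concat_prefix {α : Type*} [LinearOrder α] {l a b : List α} {x y : α}
    (hxa : l ++ [x] <+: a) (hyb : l ++ [y] <+: b) (hxy : x < y) : a < b := by
  obtain ⟨a, rfl⟩ := hxa
  obtain ⟨b, rfl⟩ := hyb
  simp only [List.append_assoc]
  exact List.append_left_lt (List.Lex.rel hxy)

theorem exists_linearOrder_monotone {α β : Type*} [LinearOrder β] (f : α → β) :
    ∃ _ : LinearOrder α, Monotone f := by
  classical
  let : LinearOrder α := linearOrderOfSTO WellOrderingRel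
  exact ⟨LinearOrder.lift' (fun a => toLex (f a, a)) fun a b h => congrArg (·.2) h,
    fun a b h => Prod.Lex.monotone_fst _ _ h⟩

theorem pathwidth_le_of_injective {V ι α : Type*} [Fintype V] [Finite ι] [LinearOrder α]
    {G : SimpleGraph V} {w : ℕ} {f : ι → α} (hf : f.Injective) {X : ι → Finset V}
    (cover : ∀ v, ∃ i, v ∈ X i) (cover_adj : ∀ u v, G.Adj u v → ∃ i, u ∈ X i ∧ v ∈ X i)
    (convex : ∀ i j k, f i ≤ f j → f j ≤ f k → ∀ v, v ∈ X i → v ∈ X k → v ∈ X j)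
    (card_le : ∀ i, (X i).card ≤ w + 1) : pathwidth G ≤ w := by
  have := Fintype.ofFinite ι
  let : LinearOrder ι := LinearOrder.lift' f hf
  let e : Fin (Fintype.card ι) ≃o ι := Fintype.orderIsoFinOfCardEq ι rfl
  refine Nat.sInf_le ⟨_, X ∘ e, ⟨fun v => ?_, fun u v huv => ?_, fun i j k hij hjk => ?_⟩,
    fun i => card_le (e i)⟩
  · exact e.surjective.exists.mp (cover v)
  · exact e.surjective.exists.mp (cover_adj u v huv)
  · exact convex _ _ _ (e.monotone hij) (e.monotone hjk)

section Rooting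

variable {V : Type*}

/-- A rooting of the forest `G`: `anc v` lists the vertices of the path from the chosen root of
the component of `v` to `v`. Thus `anc u <+: anc v` says that `u` is an ancestor of `v` (possibly
`u = v`), and `anc c = anc v ++ [c]` says that `c` is a child of `v`. -/
structure IsRooting (G : SimpleGraph V) (anc : V → List V) : Prop where
  eq_singleton_or_eq_concat : ∀ v, anc v = [v] ∨ ∃ u, anc v = anc u ++ [v]
  adj_iff : ∀ {u v}, G.Adj u v ↔ anc v = anc u ++ [v] ∨ anc u = anc v ++ [u]

theorem exists_isRooting_of_isAcyclic {G : SimpleGraph V} (hG : G.IsAcyclic) :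
    ∃ anc, IsRooting G anc := by
  let root (v : V) : V := (G.connectedComponentMk v).out
  have reachable_root (v : V) : G.Reachable (root v) v :=
    ConnectedComponent.exact (Quot.out_eq (G.connectedComponentMk v))
  have root_eq {u v : V} (h : G.Adj u v) : root u = root v := by
    simp only [root, ConnectedComponent.sound h.reachable]
  choose path isPath_path using fun v => (reachable_root v).exists_isPath
  have support_path {r v : V} (hr : r = root v) {p : G.Walk r v} (hp : p.IsPath) :
      (path v).support = p.support := by
    subst hr
    exact congrArg (fun q : G.Path _ _ => q.1.support)
      ((hG.subsingleton_path _ _).elim ⟨_, isPath_path v⟩ ⟨p, hp⟩)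
  have support_path_of_adj {u v : V} (h : G.Adj u v) (hv : v ∉ (path u).support) :
      (path v).support = (path u).support ++ [v] := by
    rw [support_path (root_eq h) ((isPath_path u).concat hv h), Walk.support_concat]
  refine ⟨fun v => (path v).support, fun v => ?_, fun {u v} => ⟨fun h => ?_, ?_⟩⟩
  · by_cases hnil : (path v).Nil
    · exact .inl ((Walk.nil_iff_support_eq.mp hnil).trans (congrArg ([·]) hnil.eq))
    · have hadj := (path v).adj_penultimate hnil
      refine .inr ⟨(path v).penultimate, ?_⟩
      rw [support_path (root_eq hadj).symm (isPath_path v).dropLast]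
      exact (Walk.support_dropLast_concat hnil).symm
  · by_cases hv : v ∈ (path u).support
    · obtain ⟨q, hq⟩ := ((reachable_root u).trans h.reachable).exists_isPath
      refine .inr (support_path_of_adj h.symm ?_)
      rw [support_path (root_eq h) hq]
      exact hG.ne_mem_support_of_support_of_adj_of_isPath (isPath_path u) hq h hv
    · exact .inl (support_path_of_adj h hv)
  · have adj_of_concat {u v : V} (h : (path v).support = (path u).support ++ [v]) : G.Adj u v := by
      have := (path v).isChain_adj_support
      rw [h, ← Walk.dropLast_support_concat, List.append_assoc] at this
      simpa using (List.isChain_append.mp this).2.1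
    exact Or.rec adj_of_concat fun h => (adj_of_concat h).symm

namespace IsRooting

variable {G : SimpleGraph V} {anc : V → List V} {u v w c t : V}

theorem exists_eq_concat (H : IsRooting G anc) (v : V) : ∃ l, anc v = l ++ [v] := by
  obtain h | ⟨u, h⟩ := H.eq_singleton_or_eq_concat v
  exacts [⟨[], h⟩, ⟨anc u, h⟩]

theorem injective (H : IsRooting G anc) : Function.Injective anc := fun u v h => by
  obtain ⟨l, hl⟩ := H.exists_eq_concat u
  obtain ⟨l', hl'⟩ := H.exists_eq_concat v
  simpa using (List.append_inj_right' (hl.symm.trans (h.trans hl')) rfl)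

theorem eq_concat_of_prefix (H : IsRooting G anc) {l : List V} (h : l ++ [c] <+: anc t) :
    anc c = l ++ [c] := by
  induction hn : (anc t).length using Nat.strong_induction_on generalizing t with
  | _ n ih =>
    obtain ht | ⟨u, ht⟩ := H.eq_singleton_or_eq_concat t
    · obtain ⟨rfl, rfl⟩ : l = [] ∧ c = t := by
        rw [ht] at h
        simpa [List.append_eq_singleton_iff] using (List.prefix_concat_iff (l₂ := [])).mp h
      simpa using ht
    · rw [ht, List.prefix_concat_iff] at h
      obtain h | h := h
      · obtain ⟨rfl, rfl⟩ : l = anc u ∧ c = t := by simpa using h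
        exact ht
      · exact ih _ (by simp [← hn, ht]) h rfl

theorem exists_child_of_prefix (H : IsRooting G anc) (h : anc v <+: anc t) (hne : v ≠ t) :
    ∃ c, anc c = anc v ++ [c] ∧ anc c <+: anc t := by
  obtain ⟨_ | ⟨c, r⟩, hr⟩ := h
  · exact absurd (H.injective (by simpa using hr)) hne
  · have hc : anc v ++ [c] <+: anc t := ⟨r, by simpa using hr⟩
    exact ⟨c, H.eq_concat_of_prefix hc, H.eq_concat_of_prefix hc ▸ hc⟩

theorem prefix_iff_of_adj (H : IsRooting G anc) {x y : V} (hy : anc y = anc x ++ [y])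
    (hadj : G.Adj u v) (hne : s(x, y) ≠ s(u, v)) : anc y <+: anc u ↔ anc y <+: anc v := by
  have prefix_iff_of_child {u v : V} (hv : anc v = anc u ++ [v]) (hne : s(x, y) ≠ s(u, v)) :
      anc y <+: anc u ↔ anc y <+: anc v := by
    rw [hv, List.prefix_concat_iff, or_iff_right]
    intro h
    rw [hy] at h
    obtain ⟨hx, rfl⟩ : anc x = anc u ∧ y = v := by simpa using h
    exact hne (by rw [H.injective hx])
  obtain hv | hu := H.adj_iff.mp hadj
  · exact prefix_iff_of_child hv hne
  · exact (prefix_iff_of_child hu (by rwa [Sym2.eq_swap (a := v)])).symm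

theorem prefix_iff_of_notMem_edges (H : IsRooting G anc) {x y : V} (hy : anc y = anc x ++ [y])
    (p : G.Walk v w) (hp : s(x, y) ∉ p.edges) : anc y <+: anc v ↔ anc y <+: anc w := by
  induction p with
  | nil => rfl
  | cons hadj q ih =>
    rw [Walk.edges_cons, List.mem_cons, not_or] at hp
    exact (H.prefix_iff_of_adj hy hadj hp.1).trans (ih hp.2)

theorem prefix_iff_not_prefix_of_mem_edges (H : IsRooting G anc) {x y : V}
    (hy : anc y = anc x ++ [y]) {p : G.Walk v w} (hp : p.IsTrail) (hxy : s(x, y) ∈ p.edges) :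
    anc y <+: anc v ↔ ¬ anc y <+: anc w := by
  induction p with
  | nil => simp at hxy
  | @cons a b _ hadj q ih =>
    rw [Walk.isTrail_cons] at hp
    by_cases he : s(x, y) = s(a, b)
    · rw [← H.prefix_iff_of_notMem_edges hy q (he ▸ hp.2)]
      have not_prefix : ¬ anc y <+: anc x := fun h => by simpa [hy] using h.length_le
      obtain ⟨rfl, rfl⟩ | ⟨rfl, rfl⟩ := Sym2.eq_iff.mp he <;> simp [not_prefix]
    · rw [H.prefix_iff_of_adj hy hadj he]
      exact ih hp.1 ((List.mem_cons.mp hxy).resolve_left he)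

end IsRooting

/-- Below `v` hangs a subdivision of the binary tree of height `h` whose edges are directed away
from the root of the forest: for `h > 0`, some descendant `u` of `v` has two children below which
such trees of height `h - 1` hang. -/
def HasBinaryTree (anc : V → List V) : ℕ → V → Prop
  | 0, _ => True
  | h + 1, v => ∃ u, anc v <+: anc u ∧
      ∃ c : Bool → V, c.Injective ∧ ∀ b, anc (c b) = anc u ++ [c b] ∧ HasBinaryTree anc h (c b)

namespace HasBinaryTree

variable {anc : V → List V} {h k : ℕ} {u v : V}

theorem of_prefix (huv : anc u <+: anc v) (hv : HasBinaryTree anc h v) :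
    HasBinaryTree anc h u := by
  cases h with
  | zero => trivial
  | succ h =>
    obtain ⟨w, hvw, hw⟩ := hv
    exact ⟨w, huv.trans hvw, hw⟩

theorem of_succ (hv : HasBinaryTree anc (h + 1) v) : HasBinaryTree anc h v := by
  induction h generalizing v with
  | zero => trivial
  | succ h ih =>
    obtain ⟨u, hvu, c, hc, hcu⟩ := hv
    exact ⟨u, hvu, c, hc, fun b => ⟨(hcu b).1, ih (hcu b).2⟩⟩

theorem mono (hkh : k ≤ h) (hv : HasBinaryTree anc h v) : HasBinaryTree anc k v :=
  Nat.decreasingInduction (motive := fun k _ => HasBinaryTree anc k v)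
    (fun _ _ => of_succ) hv hkh

end HasBinaryTree

/-- A subdivided binary tree of height `h` directed away from the root, with the string `σ`
placed at the branch vertex `η σ`: the path leading to `η σ` from above enters through
`start σ`, and the two vertices `start (b :: σ)` are distinct children of `η σ`. -/
structure IsBranching (anc : V → List V) (h : ℕ) (start η : List Bool → V) : Prop where
  start_prefix : ∀ {σ}, σ.length ≤ h → anc (start σ) <+: anc (η σ)
  start_cons : ∀ {σ}, σ.length < h → ∀ b, anc (start (b :: σ)) = anc (η σ) ++ [start (b :: σ)]
  start_cons_injective : ∀ {σ}, σ.length < h → Function.Injective fun b => start (b :: σ)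

theorem HasBinaryTree.exists_isBranching {anc : V → List V} {h : ℕ} {v : V}
    (hv : HasBinaryTree anc h v) : ∃ start η, IsBranching anc h start η := by
  have exists_branch (k : ℕ) (s : V) : ∃ (u : V) (c : Bool → V), anc s <+: anc u ∧
      (HasBinaryTree anc (k + 1) s →
        c.Injective ∧ ∀ b, anc (c b) = anc u ++ [c b] ∧ HasBinaryTree anc k (c b)) := by
    by_cases hs : HasBinaryTree anc (k + 1) s
    · obtain ⟨u, hsu, c, hc⟩ := hs
      exact ⟨u, c, hsu, fun _ => hc⟩
    · exact ⟨s, fun _ => s, List.prefix_rfl, fun h => absurd h hs⟩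
  choose branch child prefix_branch child_spec using exists_branch
  let start (σ : List Bool) : V := σ.rec v fun b σ s => child (h - σ.length - 1) s b
  have hasBinaryTree_start {σ : List Bool} (hσ : σ.length ≤ h) :
      HasBinaryTree anc (h - σ.length) (start σ) := by
    induction σ with
    | nil => exact hv
    | cons b σ ih =>
      have hs := ih (Nat.le_of_succ_le hσ)
      rw [← Nat.sub_add_cancel (Nat.sub_pos_of_lt hσ)] at hs
      exact ((child_spec _ _ hs).2 b).2
  have start_spec {σ : List Bool} (hσ : σ.length < h) :=
    child_spec _ _ ((Nat.sub_add_cancel (Nat.sub_pos_of_lt hσ)).symm ▸ hasBinaryTree_start hσ.le)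
  exact ⟨start, fun σ => branch (h - σ.length - 1) (start σ), fun _ => prefix_branch _ _,
    fun hσ b => ((start_spec hσ).2 b).1, fun hσ => (start_spec hσ).1⟩

namespace IsBranching

variable {anc : V → List V} {h : ℕ} {start η : List Bool → V} {σ τ : List Bool}

theorem prefix_cons (B : IsBranching anc h start η) (hσ : σ.length < h) (b : Bool) :
    anc (η σ) <+: anc (η (b :: σ)) :=
  (B.start_cons hσ b ▸ List.prefix_append _ _).trans (B.start_prefix hσ)

theorem start_prefix_of_suffix (B : IsBranching anc h start η) (hτ : τ.length ≤ h)
    (hστ : σ <:+ τ) : anc (start σ) <+: anc (η τ) := by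
  induction τ with
  | nil =>
    obtain rfl := List.suffix_nil.mp hστ
    exact B.start_prefix hτ
  | cons b τ ih =>
    obtain rfl | hστ := List.suffix_cons_iff.mp hστ
    · exact B.start_prefix hτ
    · exact (ih (Nat.le_of_succ_le hτ) hστ).trans (B.prefix_cons hτ b)

theorem suffix_of_start_prefix (B : IsBranching anc h start η) (hσ : σ.length ≤ h)
    (hτ : τ.length ≤ h) (hστ : anc (start σ) <+: anc (η τ)) : σ <:+ τ := by
  induction σ with
  | nil => exact List.nil_suffix
  | cons b σ ih =>
    rw [B.start_cons hσ] at hστ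
    obtain ⟨ρ, rfl⟩ := ih (Nat.le_of_succ_le hσ)
      ((B.start_prefix (Nat.le_of_succ_le hσ)).trans ((List.prefix_append _ _).trans hστ))
    obtain rfl | ⟨ρ, c, rfl⟩ := List.eq_nil_or_concat' ρ
    · simpa using hστ.length_le
    · have hc : anc (start (c :: σ)) <+: anc (η (ρ ++ [c] ++ σ)) :=
        B.start_prefix_of_suffix hτ ⟨ρ, by simp⟩
      rw [B.start_cons hσ] at hc
      have hbc : start (b :: σ) = start (c :: σ) := by
        simpa using (List.prefix_of_prefix_length_le hστ hc (by simp)).eq_of_length (by simp)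
      exact ⟨ρ, by simp [B.start_cons_injective hσ hbc]⟩

theorem eq_of_eq (B : IsBranching anc h start η) (hσ : σ.length ≤ h) (hτ : τ.length ≤ h)
    (hστ : η σ = η τ) : σ = τ := by
  have hle := B.suffix_of_start_prefix hσ hτ (hστ ▸ B.start_prefix hσ)
  have hge := B.suffix_of_start_prefix hτ hσ (hστ ▸ B.start_prefix hτ)
  exact hle.eq_of_length (hle.length_le.antisymm hge.length_le)

theorem start_prefix_of_not_prefix (B : IsBranching anc h start η) {b : Bool} {l : List V}
    (hσ : σ.length < h) (hl : l <+: anc (η (b :: σ))) (hlσ : ¬ l <+: anc (η σ)) :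
    anc (start (b :: σ)) <+: l := by
  obtain h | h := List.prefix_or_prefix_of_prefix (B.start_prefix (σ := b :: σ) hσ) hl
  · exact h
  · rw [B.start_cons hσ, List.prefix_concat_iff, ← B.start_cons hσ] at h
    exact (h.resolve_right hlσ).symm ▸ List.prefix_rfl

end IsBranching

theorem CTgraph_adj_iff {h : ℕ} {t t' : CTVert h} :
    (CTgraph h).Adj t t' ↔ (∃ b, t'.1 = b :: t.1) ∨ ∃ b, t.1 = b :: t'.1 := by
  obtain ⟨σ, hσ⟩ := t
  obtain ⟨τ, hτ⟩ := t'
  simp only [CTgraph, fromEdgeSet_adj, Set.mem_ofPred_eq, Sym2.eq_iff, Subtype.mk.injEq, ne_eq]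
  constructor
  · rintro ⟨⟨b, ρ, -, ⟨rfl, rfl⟩ | ⟨rfl, rfl⟩⟩, -⟩
    exacts [.inl ⟨b, rfl⟩, .inr ⟨b, rfl⟩]
  · rintro (⟨b, rfl⟩ | ⟨b, rfl⟩)
    · exact ⟨⟨b, σ, hτ, .inl ⟨rfl, rfl⟩⟩, by simp⟩
    · exact ⟨⟨b, τ, hσ, .inr ⟨rfl, rfl⟩⟩, by simp⟩

theorem IsBranching.isHomeoEmb {G : SimpleGraph V} {anc : V → List V} {h : ℕ}
    {start η : List Bool → V} (B : IsBranching anc h start η) (H : IsRooting G anc) :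
    IsHomeoEmb (CTgraph h) G fun σ => η σ.1 := by
  refine ⟨fun σ τ hστ => Subtype.ext (B.eq_of_eq σ.2 τ.2 hστ), ?_⟩
  rintro ⟨t, ht⟩ ⟨t₁, ht₁⟩ ⟨t₂, ht₂⟩ hadj₁ hadj₂ hne p₁ p₂ hp₁ hp₂ e he₁ he₂
  obtain ⟨x, y, hy, rfl⟩ : ∃ x y, anc y = anc x ++ [y] ∧ e = s(x, y) := by
    induction e with
    | _ x y =>
      obtain hy | hx := H.adj_iff.mp (p₁.adj_of_mem_edges he₁)
      exacts [⟨x, y, hy, rfl⟩, ⟨y, x, hx, Sym2.eq_swap⟩]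
  have cut₁ := H.prefix_iff_not_prefix_of_mem_edges hy hp₁.isTrail he₁
  have cut₂ := H.prefix_iff_not_prefix_of_mem_edges hy hp₂.isTrail he₂
  obtain ⟨b₁, rfl⟩ | ⟨b₁, rfl⟩ := CTgraph_adj_iff.mp hadj₁ <;>
    obtain ⟨b₂, rfl⟩ | ⟨b₂, h₂⟩ := CTgraph_adj_iff.mp hadj₂
  · have hyt : ¬ anc y <+: anc (η t) := fun hyt => cut₁.mp hyt (hyt.trans (B.prefix_cons ht₁ b₁))
    have start_prefix := B.start_prefix_of_not_prefix ht₁ (not_not.mp (mt cut₁.mpr hyt)) hyt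
    have hsuffix := B.suffix_of_start_prefix ht₁ ht₂
      (start_prefix.trans (not_not.mp (mt cut₂.mpr hyt)))
    exact hne (Subtype.ext (hsuffix.eq_of_length rfl))
  · obtain rfl : t = b₂ :: t₂ := h₂
    have hyt : anc y <+: anc (η (b₂ :: t₂)) := by_contra fun h =>
      h ((not_not.mp (mt cut₂.mpr h)).trans (B.prefix_cons ht b₂))
    exact cut₁.mp hyt (hyt.trans (B.prefix_cons ht₁ b₁))
  · have hyt : anc y <+: anc (η (b₁ :: t₁)) := by_contra fun h =>
      h ((not_not.mp (mt cut₁.mpr h)).trans (B.prefix_cons ht b₁))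
    exact cut₂.mp hyt (hyt.trans (B.prefix_cons ht₂ b₂))
  · exact hne (Subtype.ext (List.cons.inj h₂).2)

end Rooting

section PathWidth

variable {V : Type*} {G : SimpleGraph V} {anc : V → List V} {u v w t : V} {m : ℕ}

section DepthFirst

variable [LinearOrder V]

/-- `v` is an ancestor of `t`, and the child of `v` towards `t` is not the last child of `v`. -/
def IsLightAncestor (anc : V → List V) (v t : V) : Prop :=
  ∃ c c', c < c' ∧ anc c = anc v ++ [c] ∧ anc c' = anc v ++ [c'] ∧ anc c <+: anc t

theorem IsLightAncestor.isPrefix (hv : IsLightAncestor anc v t) : anc v <+: anc t := by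
  obtain ⟨c, _, _, hc, _, hct⟩ := hv
  exact (hc ▸ List.prefix_append _ _).trans hct

theorem IsLightAncestor.anc_ne (hv : IsLightAncestor anc v t) : anc v ≠ anc t := by
  obtain ⟨c, _, _, hc, _, hct⟩ := hv
  intro h
  simpa [hc, h] using hct.length_le

open Classical in
/-- The bag of `t` in the path-decomposition along the depth-first search that visits children in
increasing order: it consists of `t`, its parent and those ancestors of `t` with a child that the
search reaches only after leaving `t`. -/
noncomputable def dfsBag [Fintype V] (anc : V → List V) (t : V) : Finset V :=
  {v | v = t ∨ anc t = anc v ++ [t] ∨ IsLightAncestor anc v t}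

variable [Fintype V]

theorem mem_dfsBag : v ∈ dfsBag anc t ↔ v = t ∨ anc t = anc v ++ [t] ∨ IsLightAncestor anc v t := by
  simp [dfsBag]

theorem prefix_of_mem_dfsBag (hv : v ∈ dfsBag anc t) : anc v <+: anc t := by
  obtain rfl | ht | ht := mem_dfsBag.mp hv
  · exact List.prefix_rfl
  · exact ht ▸ List.prefix_append _ _
  · exact ht.isPrefix

theorem IsRooting.mem_dfsBag_of_le_of_le (H : IsRooting G anc) {i j k : V} (hij : anc i ≤ anc j)
    (hjk : anc j ≤ anc k) (hvi : v ∈ dfsBag anc i) (hvk : v ∈ dfsBag anc k) :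
    v ∈ dfsBag anc j := by
  have hvj : anc v <+: anc j :=
    prefix_of_le_of_le (prefix_of_mem_dfsBag hvi) (prefix_of_mem_dfsBag hvk) hij hjk
  by_cases hne : v = j
  · exact mem_dfsBag.mpr (.inl hne)
  obtain ⟨c, hc, hcj⟩ := H.exists_child_of_prefix hvj hne
  have le_of_prefix {d : V} (hd : anc d = anc v ++ [d]) (hdk : anc d <+: anc k) : c ≤ d :=
    not_lt.mp fun hdc => hjk.not_gt (lt_of_concat_prefix (hd ▸ hdk) (hc ▸ hcj) hdc)
  rw [mem_dfsBag]
  obtain rfl | hk | ⟨d, d', hdd', hd, hd', hdk⟩ := mem_dfsBag.mp hvk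
  · exact absurd (H.injective (hjk.antisymm (not_lt.mp hvj.le))).symm hne
  · obtain rfl | hck := (le_of_prefix hk List.prefix_rfl).eq_or_lt
    · obtain rfl := H.injective (hjk.antisymm (not_lt.mp hcj.le))
      exact .inr (.inl hk)
    · exact .inr (.inr ⟨c, k, hck, hc, hk, hcj⟩)
  · exact .inr (.inr ⟨c, d', (le_of_prefix hd hdk).trans_lt hdd', hc, hd', hcj⟩)

theorem IsRooting.pathwidth_le_of_card_dfsBag_le (H : IsRooting G anc)
    (hm : ∀ t, (dfsBag anc t).card ≤ m + 1) : pathwidth G ≤ m := by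
  refine pathwidth_le_of_injective H.injective (X := dfsBag anc)
    (fun v => ⟨v, mem_dfsBag.mpr (.inl rfl)⟩) (fun u v huv => ?_)
    (fun i j k hij hjk v => H.mem_dfsBag_of_le_of_le hij hjk) hm
  obtain hv | hu := H.adj_iff.mp huv
  · exact ⟨v, mem_dfsBag.mpr (.inr (.inl hv)), mem_dfsBag.mpr (.inl rfl)⟩
  · exact ⟨u, mem_dfsBag.mpr (.inl rfl), mem_dfsBag.mpr (.inr (.inl hu))⟩

end DepthFirst

/-- The Horton–Strahler number of `v`: the largest height of a binary tree hanging below `v` in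
the sense of `HasBinaryTree` (with junk value `0` if these heights are unbounded). -/
noncomputable def strahler (anc : V → List V) (v : V) : ℕ :=
  sSup {h | HasBinaryTree anc h v}

theorem le_strahler_iff (hm : ¬ HasBinaryTree anc m v) {h : ℕ} :
    h ≤ strahler anc v ↔ HasBinaryTree anc h v := by
  have hbdd : BddAbove {h | HasBinaryTree anc h v} :=
    ⟨m, fun h hh => not_lt.mp fun hmh => hm (hh.mono hmh.le)⟩
  have hne : {h | HasBinaryTree anc h v}.Nonempty := ⟨0, trivial⟩
  exact ⟨fun hh => (Nat.sSup_mem hne hbdd).mono hh, fun hh => le_csSup hbdd hh⟩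

theorem strahler_lt (hm : ¬ HasBinaryTree anc m v) : strahler anc v < m := by
  rwa [← not_le, le_strahler_iff hm]

theorem strahler_le_of_prefix (hm : ∀ v, ¬ HasBinaryTree anc m v) (huv : anc u <+: anc v) :
    strahler anc v ≤ strahler anc u :=
  (le_strahler_iff (hm u)).mpr (((le_strahler_iff (hm v)).mp le_rfl).of_prefix huv)

theorem strahler_lt_of_siblings (hm : ∀ v, ¬ HasBinaryTree anc m v) {c c' : V} (hne : c ≠ c')
    (hc : anc c = anc v ++ [c]) (hc' : anc c' = anc v ++ [c'])
    (hle : strahler anc c ≤ strahler anc c') : strahler anc c < strahler anc v := by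
  refine (le_strahler_iff (hm v)).mpr ⟨v, List.prefix_rfl, fun b => if b then c else c', ?_, ?_⟩
  · simp [Function.Injective, hne, hne.symm]
  · rintro (_ | _)
    · exact ⟨hc', (le_strahler_iff (hm c')).mp hle⟩
    · exact ⟨hc, (le_strahler_iff (hm c)).mp le_rfl⟩

section Light

variable [LinearOrder V]

theorem IsLightAncestor.strahler_lt (hmono : Monotone (strahler anc))
    (hm : ∀ v, ¬ HasBinaryTree anc m v) (hv : IsLightAncestor anc v t) (hvw : anc v <+: anc w)
    (hne : anc v ≠ anc w) (hwt : anc w <+: anc t) : strahler anc w < strahler anc v := by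
  obtain ⟨c, c', hcc', hc, hc', hct⟩ := hv
  have hcw : anc c <+: anc w := List.prefix_of_prefix_length_le hct hwt (by
    rw [hc, List.length_append]
    exact Nat.lt_of_not_le fun h => hne (hvw.eq_of_length_le h))
  exact (strahler_le_of_prefix hm hcw).trans_lt
    (strahler_lt_of_siblings hm hcc'.ne hc hc' (hmono hcc'.le))

theorem IsRooting.card_dfsBag_le [Fintype V] (H : IsRooting G anc)
    (hmono : Monotone (strahler anc)) (hm : ∀ v, ¬ HasBinaryTree anc m v) (t : V) :
    (dfsBag anc t).card ≤ m + 1 := by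
  classical
  let parents : Finset V := {v | anc t = anc v ++ [t]}
  let light : Finset V := {v | IsLightAncestor anc v t}
  have card_parents : parents.card ≤ 1 := Finset.card_le_one.mpr fun u hu v hv =>
    H.injective (List.append_cancel_right
      ((Finset.mem_filter.mp hu).2.symm.trans (Finset.mem_filter.mp hv).2))
  have card_light : light.card ≤ (Finset.Ioo (strahler anc t) m).card := by
    refine Finset.card_le_card_of_injOn (strahler anc) (fun v hv => ?_) (fun u hu v hv huv => ?_)
    · have hv := (Finset.mem_filter.mp hv).2
      exact Finset.mem_Ioo.mpr ⟨hv.strahler_lt hmono hm hv.isPrefix hv.anc_ne List.prefix_rfl,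
        strahler_lt (hm v)⟩
    · have hu := (Finset.mem_filter.mp hu).2
      have hv := (Finset.mem_filter.mp hv).2
      by_contra hne
      obtain h | h := List.prefix_or_prefix_of_prefix hu.isPrefix hv.isPrefix
      · exact (hu.strahler_lt hmono hm h (H.injective.ne hne) hv.isPrefix).ne' huv
      · exact (hv.strahler_lt hmono hm h (H.injective.ne hne).symm hu.isPrefix).ne huv
  have dfsBag_subset : dfsBag anc t ⊆ insert t (parents ∪ light) := fun v hv => by
    simpa [parents, light] using mem_dfsBag.mp hv
  calc (dfsBag anc t).card
    _ ≤ (insert t (parents ∪ light)).card := Finset.card_le_card dfsBag_subset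
    _ ≤ parents.card + light.card + 1 :=
      (Finset.card_insert_le _ _).trans (Nat.succ_le_succ (Finset.card_union_le _ _))
    _ ≤ 1 + (m - strahler anc t - 1) + 1 := by
      rw [Nat.card_Ioo] at card_light
      gcongr
    _ ≤ m + 1 := by have := strahler_lt (hm t); omega

end Light

theorem IsRooting.pathwidth_le [Fintype V] (H : IsRooting G anc)
    (hm : ∀ v, ¬ HasBinaryTree anc m v) : pathwidth G ≤ m := by
  obtain ⟨_, hmono⟩ := exists_linearOrder_monotone (strahler anc)
  exact H.pathwidth_le_of_card_dfsBag_le (H.card_dfsBag_le hmono hm)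

end PathWidth

/-- Lemma 4.2. Every forest of path-width at least `a ≥ 1` admits a
homeomorphic embedding of the binary tree `CT_{a-1}`. -/
theorem homeo_emb_CT_of_forest_large_pathwidth (a : ℕ) (ha : 1 ≤ a)
    {V : Type} [Fintype V] (F : SimpleGraph V) (hF : F.IsAcyclic)
    (hpw : a ≤ pathwidth F) :
    ∃ η : CTVert (a - 1) → V, IsHomeoEmb (CTgraph (a - 1)) F η := by
  obtain ⟨anc, H⟩ := exists_isRooting_of_isAcyclic hF
  obtain ⟨v, hv⟩ : ∃ v, HasBinaryTree anc (a - 1) v := by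
    by_contra! hm
    have := H.pathwidth_le hm
    omega
  obtain ⟨start, η, B⟩ := hv.exists_isBranching
  exact ⟨fun σ => η σ.1, B.isHomeoEmb H⟩
end
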